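/- arXiv:2001.02945 — 4 statements merged into one kernel-verified Lean document; each statement's English description precedes it below -/
import Mathlib

section
/- Let p be a prime and let n, k1, k2 be positive integers. Let G be a group of order 2^n · p generated by elements ρ0, ρ1, ρ2 satisfying ρ0^2 = ρ1^2 = ρ2^2 = (ρ0ρ2)^2 = (ρ0ρ1)^{k1} = (ρ1ρ2)^{k2} = 1. Then p divides k1 or p divides k2. -/
/-! Suppose that `p` is odd and divides neither `k1` nor `k2`. Then `ρ0 ρ1`, `ρ1 ρ2` and `ρ0 ρ2`
have 2-power order, so any two of the involutions generate a dihedral 2-group. The Sylow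
2-subgroups have prime index `p`, which forces all pairs of distinct Sylow 2-subgroups to have the
same intersection: if `D` is a maximal such intersection, then `normalizer D` is not a 2-group,
hence `G = normalizer D * S` for each Sylow `S`; so if `D ≤ S`, every conjugate of `D` lies in
`S`, and `D` lies in every Sylow 2-subgroup. Sylow subgroups containing `{ρ0, ρ1}` and `{ρ1, ρ2}`
are therefore equal, or else `ρ1` lies in one that contains `{ρ0, ρ2}`; in both cases `G` would be
a 2-group. -/

section SylowIntersections

open Subgroup

open scoped Pointwise

variable {G : Type*} [Group G] {q : ℕ}

theorem lt_normalizer_inf_of_isPGroup [Fact q.Prime] {D S : Subgroup G} [Finite S]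
    (hS : IsPGroup q S) (hDS : D < S) : D < normalizer (D : Set G) ⊓ S := by
  have := hS.isNilpotent
  have hlt : D.subgroupOf S < ⊤ :=
    lt_top_iff_ne_top.2 fun h ↦ hDS.not_ge (subgroupOf_eq_top.1 h)
  obtain ⟨x, hxN, hxD⟩ :=
    SetLike.exists_of_lt (Group.normalizerCondition_of_isNilpotent (G := S) _ hlt)
  rw [← subgroupOf_normalizer_eq hDS.le] at hxN
  exact SetLike.lt_iff_le_and_exists.2
    ⟨le_inf le_normalizer hDS.le, (x : G), mem_inf.2 ⟨hxN, x.2⟩, hxD⟩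

theorem le_normalCore_of_normalizer_mul_eq_univ {D S : Subgroup G} (hDS : D ≤ S)
    (h : (normalizer (D : Set G) : Set G) * (S : Set G) = Set.univ) : D ≤ S.normalCore := by
  intro d hd g
  obtain ⟨v, hv, s, hs, hvs⟩ : g⁻¹ ∈ (normalizer (D : Set G) : Set G) * (S : Set G) :=
    h ▸ Set.mem_univ _
  have hconj : v⁻¹ * d * v ∈ S := hDS ((mem_normalizer_iff''.1 hv d).1 hd)
  have hg : g * d * g⁻¹ = s⁻¹ * (v⁻¹ * d * v) * s := by
    rw [← inv_inv g, ← hvs]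
    group
  rw [hg]
  exact S.mul_mem (S.mul_mem (S.inv_mem hs) hconj) hs

theorem sylow_inf_lt_left {S T : Sylow q G} (hST : S ≠ T) : (S ⊓ T : Subgroup G) < S :=
  inf_le_left.lt_of_ne fun h ↦ hST (Sylow.ext (S.3 T.2 (inf_eq_left.1 h)).symm)

/-- A Sylow intersection is the intersection of two distinct Sylow `q`-subgroups; normalizers of the
maximal ones control all the others. -/
def IsSylowIntersection (q : ℕ) (D : Subgroup G) : Prop :=
  ∃ S T : Sylow q G, S ≠ T ∧ (S ⊓ T : Subgroup G) = D

/-- Otherwise a Sylow subgroup `R ≥ normalizer D` would meet each Sylow subgroup containing `D` in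
more than `D`, and so equal both of those intersecting in `D`. -/
theorem not_isPGroup_normalizer_of_maximal [Finite G] [Fact q.Prime] {D : Subgroup G}
    (hD : Maximal (IsSylowIntersection q) D) : ¬ IsPGroup q (normalizer (D : Set G)) := by
  intro hN
  obtain ⟨R, hR⟩ := hN.exists_le_sylow
  have eq_of_lt (U : Sylow q G) (hU : D < U) : R = U := by
    by_contra hne
    have hlt : D < (R ⊓ U : Subgroup G) :=
      (lt_normalizer_inf_of_isPGroup U.2 hU).trans_le (inf_le_inf_right _ hR)
    exact hD.not_prop_of_gt hlt ⟨R, U, hne, rfl⟩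
  obtain ⟨S, T, hST, rfl⟩ := hD.prop
  refine hST ((eq_of_lt S (sylow_inf_lt_left hST)).symm.trans (eq_of_lt T ?_))
  exact inf_comm (T : Subgroup G) S ▸ sylow_inf_lt_left hST.symm

theorem isPGroup_or_mul_sylow_eq_univ [Finite G] [Fact q.Prime] {S : Sylow q G}
    (hS : S.index.Prime) (H : Subgroup G) :
    IsPGroup q H ∨ (H : Set G) * (S : Set G) = Set.univ := by
  have hcard : Nat.card S * S.index = Nat.card G := S.card_mul_index
  by_cases hdvd : S.index ∣ Nat.card H
  · have : Fact S.index.Prime := ⟨hS⟩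
    obtain ⟨⟨u, huH⟩, hu⟩ := exists_prime_orderOf_dvd_card' S.index hdvd
    rw [orderOf_mk] at hu
    have hu' : Nat.card (zpowers u) = S.index := (Nat.card_zpowers u).trans hu
    have hcompl : IsComplement' (zpowers u) (S : Subgroup G) :=
      isComplement'_of_coprime (by rw [hu', mul_comm]; exact hcard)
        (hu' ▸ S.card_coprime_index.symm)
    refine .inr (Set.eq_univ_of_univ_subset ?_)
    rw [← hcompl.mul_eq]
    exact Set.mul_subset_mul_right (zpowers_le.2 huH)
  · obtain ⟨j, hj⟩ := IsPGroup.iff_card.1 S.2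
    have hH : Nat.card H ∣ Nat.card S * S.index := hcard ▸ card_subgroup_dvd_card H
    exact .inl (.of_card_dvd_pow
      (hj ▸ (hS.coprime_iff_not_dvd.2 hdvd).symm.dvd_of_dvd_mul_right hH))

theorem inf_le_sylow_of_ne [Finite G] [Fact q.Prime] (hindex : ∀ S : Sylow q G, S.index.Prime)
    {A B : Sylow q G} (hAB : A ≠ B) (C : Sylow q G) : (A ⊓ B : Subgroup G) ≤ C := by
  obtain ⟨D, hle, hD⟩ := (Set.toFinite {D : Subgroup G | IsSylowIntersection q D}).exists_le_maximal
    ⟨A, B, hAB, rfl⟩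
  obtain ⟨S, T, -, hST⟩ := hD.prop
  have hDS : D ≤ S := hST ▸ inf_le_left
  have huniv := (isPGroup_or_mul_sylow_eq_univ (hindex S) _).resolve_left
    (not_isPGroup_normalizer_of_maximal hD)
  have hcore : IsPGroup q (S : Subgroup G).normalCore := S.2.to_le (normalCore_le _)
  exact hle.trans
    ((le_normalCore_of_normalizer_mul_eq_univ hDS huniv).trans (hcore.le_sylow_of_normal C))

theorem isPGroup_closure_triple [Finite G] [Fact q.Prime]
    (hindex : ∀ S : Sylow q G, S.index.Prime) {a b c : G} (hab : IsPGroup q (closure {a, b}))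
    (hbc : IsPGroup q (closure {b, c})) (hac : IsPGroup q (closure {a, c})) :
    IsPGroup q (closure {a, b, c}) := by
  have of_mem (S : Sylow q G) (ha : a ∈ S) (hb : b ∈ S) (hc : c ∈ S) :
      IsPGroup q (closure {a, b, c}) :=
    S.2.to_le ((closure_le _).2 (by rintro x (rfl | rfl | rfl) <;> assumption))
  have exists_sylow {x y : G} (h : IsPGroup q (closure {x, y})) : ∃ S : Sylow q G, x ∈ S ∧ y ∈ S :=
    have ⟨S, hS⟩ := h.exists_le_sylow
    ⟨S, hS (mem_closure_of_mem (by simp)), hS (mem_closure_of_mem (by simp))⟩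
  obtain ⟨A, haA, hbA⟩ := exists_sylow hab
  obtain ⟨B, hbB, hcB⟩ := exists_sylow hbc
  obtain ⟨C, haC, hcC⟩ := exists_sylow hac
  rcases eq_or_ne A B with rfl | hAB
  · exact of_mem A haA hbA hcB
  · exact of_mem C haC (inf_le_sylow_of_ne hindex hAB C ⟨hbA, hbB⟩) hcC

theorem sylow_index_eq_of_card_eq [Finite G] [Fact q.Prime] {n m : ℕ}
    (hcard : Nat.card G = q ^ n * m) (hm : ¬ q ∣ m) (S : Sylow q G) : S.index = m := by
  have hmul : Nat.card S * S.index = q ^ n * m := S.card_mul_index.trans hcard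
  have coprime_pow {k : ℕ} (j : ℕ) (hk : ¬ q ∣ k) : Nat.Coprime k (q ^ j) :=
    ((Nat.Prime.coprime_iff_not_dvd Fact.out).2 hk).symm.pow_right j
  obtain ⟨j, hj⟩ := IsPGroup.iff_card.1 S.2
  apply Nat.dvd_antisymm
  · exact (coprime_pow n S.not_dvd_index).dvd_of_dvd_mul_left (hmul ▸ dvd_mul_left _ _)
  · exact (hj ▸ coprime_pow j hm : m.Coprime (Nat.card S)).dvd_of_dvd_mul_left
      (hmul ▸ dvd_mul_left _ _)

end SylowIntersections

section Involutions

open Subgroup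

variable {G : Type*} [Group G] {a b c : G}

theorem isPGroup_zpowers_of_pow_eq_one {q m : ℕ} (h : a ^ q ^ m = 1) : IsPGroup q (zpowers a) :=
  .of_card_dvd_pow (n := m) (Nat.card_zpowers a ▸ orderOf_dvd_of_pow_eq_one h)

theorem mem_normalizer_zpowers_of_conj_eq_inv (h : a * b * a⁻¹ = b⁻¹) :
    a ∈ normalizer (zpowers b : Set G) := by
  rw [mem_normalizer_iff_map_conj_eq, MonoidHom.map_zpowers]
  simp [h]

theorem inv_eq_self_of_sq_eq_one (ha : a ^ 2 = 1) : a⁻¹ = a :=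
  inv_eq_of_mul_eq_one_left (sq a ▸ ha)

theorem isPGroup_two_closure_pair {m : ℕ} (ha : a ^ 2 = 1) (hb : b ^ 2 = 1)
    (hab : (a * b) ^ 2 ^ m = 1) : IsPGroup 2 (closure {a, b}) := by
  have hconj : a * (a * b) * a⁻¹ = (a * b)⁻¹ := by
    rw [mul_inv_rev, inv_eq_self_of_sq_eq_one hb, ← mul_assoc a a b, ← sq, ha, one_mul]
  have hsup : IsPGroup 2 (zpowers a ⊔ zpowers (a * b) : Subgroup G) :=
    (isPGroup_zpowers_of_pow_eq_one (m := 1) ha).to_sup_of_normal_right'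
      (isPGroup_zpowers_of_pow_eq_one hab)
      (zpowers_le.2 (mem_normalizer_zpowers_of_conj_eq_inv hconj))
  have ha_mem : a ∈ zpowers a ⊔ zpowers (a * b) := mem_sup_left (mem_zpowers a)
  have hab_mem : a * b ∈ zpowers a ⊔ zpowers (a * b) := mem_sup_right (mem_zpowers _)
  refine hsup.to_le ((closure_le _).2 ?_)
  rintro x (rfl | rfl)
  exacts [ha_mem, (mul_mem_cancel_left ha_mem).1 hab_mem]

theorem pow_eq_one_of_card_eq_mul_prime {p k N : ℕ} (hp : p.Prime) (hcard : Nat.card G = N * p)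
    (hk : ¬ p ∣ k) (h : a ^ k = 1) : a ^ N = 1 := by
  have hcop : (orderOf a).Coprime p :=
    ((hp.coprime_iff_not_dvd.2 hk).coprime_dvd_right (orderOf_dvd_of_pow_eq_one h)).symm
  exact orderOf_dvd_iff_pow_eq_one.1
    (hcop.dvd_of_dvd_mul_right (hcard ▸ orderOf_dvd_natCard a))

theorem prime_dvd_of_closure_involutions_of_ne_two [Finite G] {p n k l m : ℕ} (hp : p.Prime)
    (hp2 : p ≠ 2) (hgen : closure {a, b, c} = ⊤) (hcard : Nat.card G = 2 ^ n * p)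
    (ha : a ^ 2 = 1) (hb : b ^ 2 = 1) (hc : c ^ 2 = 1)
    (hab : (a * b) ^ k = 1) (hbc : (b * c) ^ l = 1) (hac : (a * c) ^ m = 1) :
    p ∣ k ∨ p ∣ l ∨ p ∣ m := by
  by_contra! ⟨hk, hl, hm⟩
  have hindex (S : Sylow 2 G) : S.index.Prime := by
    rwa [sylow_index_eq_of_card_eq hcard
      (fun h ↦ hp2 ((Nat.prime_dvd_prime_iff_eq Nat.prime_two hp).1 h).symm)]
  have htop : IsPGroup 2 (closure {a, b, c}) := isPGroup_closure_triple hindex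
    (isPGroup_two_closure_pair ha hb (pow_eq_one_of_card_eq_mul_prime hp hcard hk hab))
    (isPGroup_two_closure_pair hb hc (pow_eq_one_of_card_eq_mul_prime hp hcard hl hbc))
    (isPGroup_two_closure_pair ha hc (pow_eq_one_of_card_eq_mul_prime hp hcard hm hac))
  obtain ⟨j, hj⟩ := IsPGroup.iff_card.1 htop
  rw [hgen, card_top, hcard] at hj
  have hdvd : p ∣ 2 ^ j := hj ▸ dvd_mul_left p _
  exact hp2 ((Nat.prime_dvd_prime_iff_eq hp Nat.prime_two).1 (hp.dvd_of_dvd_pow hdvd))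

theorem eq_of_isPGroup_two_of_odd {k : ℕ} (hG : IsPGroup 2 G) (hk : ¬ 2 ∣ k) (hb : b ^ 2 = 1)
    (hab : (a * b) ^ k = 1) : a = b := by
  have hcop : Nat.Coprime 2 k := (Nat.Prime.coprime_iff_not_dvd Nat.prime_two).2 hk
  have hone : a * b = 1 := (hG.powEquiv hcop).injective (by simp [hab])
  rw [eq_inv_of_mul_eq_one_left hone, inv_eq_self_of_sq_eq_one hb]

theorem two_dvd_of_closure_involutions_of_isPGroup_two {k l : ℕ} (hG : IsPGroup 2 G)
    (htwo : 2 < Nat.card G) (hgen : closure {a, b, c} = ⊤) (hb : b ^ 2 = 1) (hc : c ^ 2 = 1)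
    (hab : (a * b) ^ k = 1) (hbc : (b * c) ^ l = 1) : 2 ∣ k ∨ 2 ∣ l := by
  by_contra! ⟨hk, hl⟩
  obtain rfl := eq_of_isPGroup_two_of_odd hG hk hb hab
  obtain rfl := eq_of_isPGroup_two_of_odd hG hl hc hbc
  have hcard : Nat.card G = orderOf a := by
    rw [← card_top, ← hgen, ← Nat.card_zpowers, zpowers_eq_closure]
    simp
  have hle : orderOf a ≤ 2 := Nat.le_of_dvd two_pos (orderOf_dvd_of_pow_eq_one hb)
  exact (hcard ▸ htwo).not_ge hle

theorem stmt_0_general [Finite G] {p n m k1 k2 : ℕ} (hp : p.Prime) (hn : 0 < n)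
    {ρ0 ρ1 ρ2 : G} (hgen : closure {ρ0, ρ1, ρ2} = ⊤) (hcard : Nat.card G = 2 ^ n * p)
    (h0 : ρ0 ^ 2 = 1) (h1 : ρ1 ^ 2 = 1) (h2 : ρ2 ^ 2 = 1) (h02 : (ρ0 * ρ2) ^ 2 ^ m = 1)
    (h01 : (ρ0 * ρ1) ^ k1 = 1) (h12 : (ρ1 * ρ2) ^ k2 = 1) : p ∣ k1 ∨ p ∣ k2 := by
  rcases eq_or_ne p 2 with rfl | hp2
  · have htwo : 2 < Nat.card G := by
      have := Nat.one_lt_two_pow hn.ne'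
      omega
    have hG : IsPGroup 2 G := .of_card (hcard.trans (pow_succ 2 n).symm)
    exact two_dvd_of_closure_involutions_of_isPGroup_two hG htwo hgen h1 h2 h01 h12
  · have hpm : ¬ p ∣ 2 ^ m := fun h ↦
      hp2 ((Nat.prime_dvd_prime_iff_eq hp Nat.prime_two).1 (hp.dvd_of_dvd_pow h))
    simpa only [hpm, or_false] using
      prime_dvd_of_closure_involutions_of_ne_two hp hp2 hgen hcard h0 h1 h2 h01 h12 h02

end Involutions

/-- Theorem 3.1: if a group of order `2^n * p` is generated by three "involutions"
`ρ0, ρ1, ρ2` with `(ρ0 ρ2)^2 = (ρ0 ρ1)^{k1} = (ρ1 ρ2)^{k2} = 1`,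
then `p ∣ k1` or `p ∣ k2`. -/
theorem stmt_0 {G : Type*} [Group G] [Finite G] (p n k1 k2 : ℕ)
    (hp : p.Prime) (hn : 0 < n) (hk1 : 0 < k1) (hk2 : 0 < k2)
    (ρ0 ρ1 ρ2 : G) (hgen : Subgroup.closure {ρ0, ρ1, ρ2} = ⊤)
    (hcard : Nat.card G = 2 ^ n * p)
    (h0 : ρ0 ^ 2 = 1) (h1 : ρ1 ^ 2 = 1) (h2 : ρ2 ^ 2 = 1)
    (h02 : (ρ0 * ρ2) ^ 2 = 1)
    (h01 : (ρ0 * ρ1) ^ k1 = 1) (h12 : (ρ1 * ρ2) ^ k2 = 1) :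
    p ∣ k1 ∨ p ∣ k2 :=
  stmt_0_general (m := 1) hp hn hgen hcard h0 h1 h2 h02 h01 h12
end

section
/- Let s, t, n be integers with s ≥ 2, t ≥ 2, n ≥ s + t + 1 and n − s − t odd, and let ℓ1, ℓ2 be odd positive integers. Let G be the presented group on generators ρ0, ρ1, ρ2 with relation set {ρ0^2, ρ1^2, ρ2^2, (ρ0ρ1)^{2^s·ℓ1}, (ρ1ρ2)^{2^t·ℓ2}, (ρ0ρ2)^2, [(ρ0ρ1)^4, ρ2], [ρ0, (ρ1ρ2)^4], [(ρ0ρ1)^2, ρ2]^{2^{(n−s−t−1)/2}}}, where [x, y] = x⁻¹y⁻¹xy. Then G has order 2^n · ℓ1 · ℓ2, G is solvable, in G the images of ρ0, ρ1, ρ2 and ρ0ρ2 have order exactly 2, the image of ρ0ρ1 has order exactly 2^s·ℓ1, the image of ρ1ρ2 has order exactly 2^t·ℓ2, and the triple of images of (ρ0, ρ1, ρ2) satisfies the intersection property in G. -/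
namespace Stmt9

def r0 : FreeGroup (Fin 3) := FreeGroup.of 0
def r1 : FreeGroup (Fin 3) := FreeGroup.of 1
def r2 : FreeGroup (Fin 3) := FreeGroup.of 2

/-- The commutator `[x, y] = x⁻¹ y⁻¹ x y` as used in the paper. -/
def pc (x y : FreeGroup (Fin 3)) : FreeGroup (Fin 3) := x⁻¹ * y⁻¹ * x * y

/-- The relations of the presented group `G` of Theorem 4.1, case `n - s - t` odd. -/
def rels (s t n l1 l2 : ℕ) : Set (FreeGroup (Fin 3)) :=
  {r0 ^ 2, r1 ^ 2, r2 ^ 2,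
   (r0 * r1) ^ (2 ^ s * l1), (r1 * r2) ^ (2 ^ t * l2), (r0 * r2) ^ 2,
   pc ((r0 * r1) ^ 4) r2, pc r0 ((r1 * r2) ^ 4),
   (pc ((r0 * r1) ^ 2) r2) ^ (2 ^ ((n - s - t - 1) / 2))}

/-- The image of the `i`-th generator. -/
def g (s t n l1 l2 : ℕ) (i : Fin 3) : PresentedGroup (rels s t n l1 l2) :=
  PresentedGroup.of i

/-- The intersection property for a triple of elements. -/
def InterProp {G : Type*} [Group G] (ρ : Fin 3 → G) : Prop :=
  ∀ I J : Set (Fin 3),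
    Subgroup.closure (ρ '' I) ⊓ Subgroup.closure (ρ '' J) =
      Subgroup.closure (ρ '' (I ∩ J))

/-!
Write `a, b, c` for the generators and `p, q, m` for the three exponents. The cyclic subgroups
`⟨(ab)⁴⟩` and `⟨(bc)⁴⟩` are normal, and modulo them the group is a quotient of the Coxeter group
`[4, 4]`: an abelian group generated by two translations `u = abcb` and `v = babc`, extended by the
dihedral group `⟨b, c⟩`. This gives solvability and the normal form `uʲ vᵏ w (ab)⁴ⁱ` with
`w ∈ ⟨b, c⟩`.

The last relator is `v²ᵐ`, and the group acts on the torus `(ℤ/2m)²` with `u` and `v` as the unit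
translations. The stabilizer of the origin consists of the elements `w (ab)⁴ⁱ`; it maps onto the
dihedral group of order `2q` with kernel `⟨(ab)⁴⟩` of order `p/4`, so the group has order
`(2m)² * 2q * p/4`.

All relations survive when some of the generators are replaced by `1`, because `p` and `q` are
even. So every subgroup generated by some of the generators is a retract, and the retractions give
the intersection property.
-/

section Words

open Subgroup

variable {G : Type*} [Group G]

theorem inv_eq_self_of_sq_eq_one {a : G} (ha : a ^ 2 = 1) : a⁻¹ = a :=
  inv_eq_of_mul_eq_one_right (by rw [← sq, ha])

theorem pow_eq_one_of_even {a : G} (ha : a ^ 2 = 1) {n : ℕ} (hn : Even n) : a ^ n = 1 :=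
  orderOf_dvd_iff_pow_eq_one.1 ((orderOf_dvd_of_pow_eq_one ha).trans hn.two_dvd)

theorem conj_sq_eq_one {a b : G} (ha : a ^ 2 = 1) (hb : b ^ 2 = 1) : (b * a * b) ^ 2 = 1 := by
  nth_rw 2 [← inv_eq_self_of_sq_eq_one hb]
  rw [conj_pow, ha, mul_one, mul_inv_cancel]

theorem commute_of_mul_sq_eq_one {a b : G} (ha : a ^ 2 = 1) (hb : b ^ 2 = 1)
    (hab : (a * b) ^ 2 = 1) : Commute a b := by
  have h := inv_eq_self_of_sq_eq_one hab
  rw [mul_inv_rev, inv_eq_self_of_sq_eq_one ha, inv_eq_self_of_sq_eq_one hb] at h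
  exact h.symm

theorem commute_conj_of_mul_pow_four_eq_one {a b : G} (ha : a ^ 2 = 1) (hb : b ^ 2 = 1)
    (hab : (a * b) ^ 4 = 1) : Commute a (b * a * b) := by
  refine commute_of_mul_sq_eq_one ha (conj_sq_eq_one ha hb) ?_
  rw [← hab, pow_mul (a * b) 2 2, sq (a * b)]
  simp only [mul_assoc]

theorem semiconjBy_left_mul_inv {a b : G} (ha : a ^ 2 = 1) (hb : b ^ 2 = 1) :
    SemiconjBy a (a * b) (a * b)⁻¹ := by
  rw [SemiconjBy, mul_inv_rev, inv_mul_cancel_right, inv_eq_self_of_sq_eq_one hb, ← mul_assoc,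
    ← sq, ha, one_mul]

theorem semiconjBy_right_mul_inv {a b : G} (ha : a ^ 2 = 1) (hb : b ^ 2 = 1) :
    SemiconjBy b (a * b) (a * b)⁻¹ := by
  rw [SemiconjBy, mul_inv_rev, inv_eq_self_of_sq_eq_one ha, inv_eq_self_of_sq_eq_one hb, mul_assoc]

theorem map_conj_zpowers {s x y : G} (h : SemiconjBy s x y) :
    (zpowers x).map (MulAut.conj s) = zpowers y := by
  rw [MonoidHom.map_zpowers, MonoidHom.coe_coe, MulAut.conj_apply, h.eq, mul_inv_cancel_right]

theorem mem_normalizer_zpowers {s x : G} (h : Commute s x ∨ SemiconjBy s x x⁻¹) :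
    s ∈ normalizer (zpowers x : Set G) := by
  rw [mem_normalizer_iff_map_conj_eq]
  rcases h with h | h
  · exact map_conj_zpowers h
  · rw [map_conj_zpowers h, zpowers_inv]

theorem normal_of_closure_eq_top {S : Set G} (hS : closure S = ⊤) {H : Subgroup G}
    (h : ∀ s ∈ S, s ∈ normalizer (H : Set G)) : H.Normal := by
  rw [← normalizer_eq_top_iff, eq_top_iff, ← hS, closure_le]
  exact h

theorem exists_zpow_mul_zpow_of_mem_sup {x y g : G} (hyx : y ∈ normalizer (zpowers x : Set G))
    (hg : g ∈ zpowers x ⊔ zpowers y) : ∃ j k : ℤ, g = x ^ j * y ^ k := by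
  rw [← SetLike.mem_coe, coe_mul_of_right_le_normalizer_left _ _ (zpowers_le.2 hyx)] at hg
  obtain ⟨_, ⟨j, rfl⟩, _, ⟨k, rfl⟩, rfl⟩ := hg
  exact ⟨j, k, rfl⟩

theorem isSolvable_sup {N H : Subgroup G} [Group.IsSolvable N] [Group.IsSolvable H]
    (h : H ≤ normalizer (N : Set G)) : Group.IsSolvable (H ⊔ N : Subgroup G) := by
  have := normal_subgroupOf_sup_of_le_normalizer h
  have := normal_subgroupOf_of_le_normalizer h
  rw [Group.isSolvable_iff_subgroup_quotient (N.subgroupOf (H ⊔ N))]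
  exact ⟨Group.isSolvable_of_isSolvable_injective
      (f := (subgroupOfEquivOfLe (le_sup_right : N ≤ H ⊔ N)).toMonoidHom)
      (subgroupOfEquivOfLe le_sup_right).injective,
    Group.isSolvable_of_surjective
      (f := (QuotientGroup.quotientInfEquivProdNormalizerQuotient H N h).toMonoidHom)
      (QuotientGroup.quotientInfEquivProdNormalizerQuotient H N h).surjective⟩

theorem isSolvable_zpowers (x : G) : Group.IsSolvable (zpowers x) :=
  Group.isSolvable_of_comm fun y z => (IsMulCommutative.is_comm (M := zpowers x)).comm y z

theorem isSolvable_zpowers_sup_zpowers {x y : G} (h : y ∈ normalizer (zpowers x : Set G)) :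
    Group.IsSolvable (zpowers x ⊔ zpowers y : Subgroup G) := by
  have := isSolvable_zpowers x
  have := isSolvable_zpowers y
  rw [sup_comm]
  exact isSolvable_sup (zpowers_le.2 h)

theorem closure_pair_eq_zpowers_sup_zpowers (b c : G) :
    closure {b, c} = zpowers (b * c) ⊔ zpowers b := by
  refine le_antisymm ((closure_le _).2 ?_) (sup_le ?_ ?_)
  · have hb : b ∈ zpowers (b * c) ⊔ zpowers b := mem_sup_right (mem_zpowers b)
    have hbc : b * c ∈ zpowers (b * c) ⊔ zpowers b := mem_sup_left (mem_zpowers _)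
    rintro _ (rfl | rfl)
    · exact hb
    · exact (mul_mem_cancel_left hb).1 hbc
  · exact zpowers_le.2 (mul_mem (mem_closure_of_mem (by simp)) (mem_closure_of_mem (by simp)))
  · exact zpowers_le.2 (mem_closure_of_mem (by simp))

section Dihedral

variable {b c : G}

theorem mem_normalizer_zpowers_mul (hb : b ^ 2 = 1) (hc : c ^ 2 = 1) :
    b ∈ normalizer (zpowers (b * c) : Set G) :=
  mem_normalizer_zpowers (.inr (semiconjBy_left_mul_inv hb hc))

theorem isSolvable_closure_pair (hb : b ^ 2 = 1) (hc : c ^ 2 = 1) :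
    Group.IsSolvable (closure {b, c}) := by
  rw [closure_pair_eq_zpowers_sup_zpowers]
  exact isSolvable_zpowers_sup_zpowers (mem_normalizer_zpowers_mul hb hc)

open DihedralGroup in
theorem eq_one_of_map_dihedralGroup_eq_one (hb : b ^ 2 = 1) (hc : c ^ 2 = 1) {n : ℕ}
    (hbc : (b * c) ^ n = 1) (f : G →* DihedralGroup n) (fb : f b = sr 0) (fc : f c = sr 1)
    {w : G} (hw : w ∈ closure {b, c}) (h : f w = 1) : w = 1 := by
  rw [closure_pair_eq_zpowers_sup_zpowers] at hw
  obtain ⟨j, k, rfl⟩ := exists_zpow_mul_zpow_of_mem_sup (mem_normalizer_zpowers_mul hb hc) hw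
  have fbc : f (b * c) = r 1 := by rw [map_mul, fb, fc, sr_mul_sr, sub_zero]
  obtain ⟨k, rfl | rfl⟩ := Int.even_or_odd' k
  · have hbk : b ^ (2 * k) = 1 := by rw [zpow_mul, zpow_ofNat, hb, one_zpow]
    rw [hbk, mul_one] at h ⊢
    rw [map_zpow, fbc, ← orderOf_dvd_iff_zpow_eq_one, orderOf_r_one] at h
    exact orderOf_dvd_iff_zpow_eq_one.1
      ((Int.natCast_dvd_natCast.2 (orderOf_dvd_of_pow_eq_one hbc)).trans h)
  · have hbk : b ^ (2 * k + 1) = b := by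
      rw [zpow_add_one, zpow_mul, zpow_ofNat, hb, one_zpow, one_mul]
    rw [hbk, map_mul, map_zpow, fbc, fb, r_one_zpow, r_mul_sr, one_def] at h
    cases h

end Dihedral

open DihedralGroup in
theorem closure_sr_zero_sr_one (n : ℕ) :
    closure {sr 0, sr 1} = (⊤ : Subgroup (DihedralGroup n)) := by
  have h0 : (sr 0 : DihedralGroup n) ∈ closure {sr 0, sr 1} := mem_closure_of_mem (by simp)
  have h1 : (sr 1 : DihedralGroup n) ∈ closure {sr 0, sr 1} := mem_closure_of_mem (by simp)
  have hr (i : ZMod n) : r i ∈ closure {sr 0, (sr 1 : DihedralGroup n)} := by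
    obtain ⟨i, rfl⟩ := ZMod.intCast_surjective i
    simpa using zpow_mem (mul_mem h0 h1) i
  rw [eq_top_iff']
  rintro (i | i)
  · exact hr i
  · simpa using mul_mem h0 (hr i)

theorem index_comap_stabilizer {X : Type*} (f : G →* Equiv.Perm X) (x : X)
    (h : ∀ y, ∃ g, f g x = y) :
    ((MulAction.stabilizer (Equiv.Perm X) x).comap f).index = Nat.card X := by
  let _ := MulAction.compHom X f
  have horbit : MulAction.orbit G x = Set.univ := Set.eq_univ_of_forall h
  rw [← Set.ncard_univ, ← horbit]
  exact MulAction.index_stabilizer G x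

theorem card_eq_card_inf_ker_mul_card_map_mul_index {K : Type*} [Group K] (H : Subgroup G)
    (f : G →* K) :
    Nat.card G = Nat.card (H ⊓ f.ker : Subgroup G) * Nat.card (H.map f) * H.index := by
  rw [← card_mul_index (H ⊓ f.ker), ← relIndex_mul_index (inf_le_left : H ⊓ f.ker ≤ H),
    inf_relIndex_left, relIndex_ker, mul_assoc]

theorem orderOf_eq_of_orderOf_map {K : Type*} [Group K] (f : G →* K) {x : G} {n : ℕ}
    (hx : x ^ n = 1) (hf : orderOf (f x) = n) : orderOf x = n :=
  Nat.dvd_antisymm (orderOf_dvd_of_pow_eq_one hx) (hf ▸ orderOf_map_dvd f x)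

theorem closure_map_eq_top {K : Type*} [Group K] {f : G →* K} (hf : Function.Surjective f)
    {a b c : G} (h : closure {a, b, c} = ⊤) : closure {f a, f b, f c} = ⊤ := by
  rw [← Set.image_pair, ← Set.image_insert_eq, ← MonoidHom.map_closure, h,
    map_top_of_surjective f hf]

end Words

section Relations

open Subgroup QuotientGroup

variable {G K : Type*} [Group G] [Group K]

/-- The elements `a`, `b`, `c` satisfy the relations of the paper with exponents `p`, `q`, `m` in
place of `2 ^ s * ℓ₁`, `2 ^ t * ℓ₂`, `2 ^ ((n - s - t - 1) / 2)`. -/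
structure Relations (p q m : ℕ) (a b c : G) : Prop where
  a_sq : a ^ 2 = 1
  b_sq : b ^ 2 = 1
  c_sq : c ^ 2 = 1
  ab_pow : (a * b) ^ p = 1
  bc_pow : (b * c) ^ q = 1
  ac_sq : (a * c) ^ 2 = 1
  commute_ab_c : Commute ((a * b) ^ 4) c
  commute_a_bc : Commute a ((b * c) ^ 4)
  comm_pow : (((a * b) ^ 2)⁻¹ * c⁻¹ * (a * b) ^ 2 * c) ^ m = 1

/-- The word `a (b c b)`, one of the two translations generating the translation subgroup of the
Coxeter group `[4, 4]`. -/
def translU (a b c : G) : G := a * (b * c * b)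

/-- The conjugate `(b a b) c` of `translU a b c` by the involution `b`. -/
def translV (a b c : G) : G := b * a * b * c

theorem map_translU (f : G →* K) (a b c : G) :
    f (translU a b c) = translU (f a) (f b) (f c) := by
  simp only [translU, map_mul]

theorem map_translV (f : G →* K) (a b c : G) :
    f (translV a b c) = translV (f a) (f b) (f c) := by
  simp only [translV, map_mul]

theorem semiconjBy_translV_translU {a b c : G} (hb : b ^ 2 = 1) :
    SemiconjBy b (translV a b c) (translU a b c) := by
  rw [SemiconjBy, translU, translV]
  simp only [← mul_assoc, ← sq, hb, one_mul]
  simp only [mul_assoc, ← sq, hb, mul_one]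

theorem semiconjBy_translU_translV {a b c : G} (hb : b ^ 2 = 1) :
    SemiconjBy b (translU a b c) (translV a b c) := by
  simpa only [inv_eq_self_of_sq_eq_one hb] using (semiconjBy_translV_translU hb).inv_symm_left

theorem translV_sq {a b c : G} (ha : a ^ 2 = 1) (hb : b ^ 2 = 1) (hc : c ^ 2 = 1)
    (hac : (a * c) ^ 2 = 1) :
    translV a b c ^ 2 = ((a * b) ^ 2)⁻¹ * c⁻¹ * (a * b) ^ 2 * c := by
  have haca : a * c * a = c := by
    rw [(commute_of_mul_sq_eq_one ha hc hac).eq, mul_assoc, ← sq, ha, mul_one]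
  calc translV a b c ^ 2 = b * a * b * c * (b * a * b * c) := sq _
    _ = b * a * b * (a * c * a) * (b * a * b * c) := by rw [haca]
    _ = ((a * b) ^ 2)⁻¹ * c⁻¹ * (a * b) ^ 2 * c := by
      simp only [sq, mul_inv_rev, inv_eq_self_of_sq_eq_one ha, inv_eq_self_of_sq_eq_one hb,
        inv_eq_self_of_sq_eq_one hc, mul_assoc]

theorem relations_face {p q : ℕ} (m : ℕ) {a b : G} (ha : a ^ 2 = 1) (hb : b ^ 2 = 1)
    (hab : (a * b) ^ p = 1) (hq : Even q) : Relations p q m a b 1 where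
  a_sq := ha
  b_sq := hb
  c_sq := one_pow 2
  ab_pow := hab
  bc_pow := by rw [mul_one, pow_eq_one_of_even hb hq]
  ac_sq := by rw [mul_one, ha]
  commute_ab_c := .one_right _
  commute_a_bc := by
    rw [mul_one, pow_eq_one_of_even hb (by decide)]
    exact .one_right a
  comm_pow := by simp

theorem relations_vertex {p q : ℕ} (m : ℕ) {b c : G} (hb : b ^ 2 = 1) (hc : c ^ 2 = 1)
    (hbc : (b * c) ^ q = 1) (hp : Even p) : Relations p q m 1 b c where
  a_sq := one_pow 2
  b_sq := hb
  c_sq := hc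
  ab_pow := by rw [one_mul, pow_eq_one_of_even hb hp]
  bc_pow := hbc
  ac_sq := by rw [one_mul, hc]
  commute_ab_c := by
    rw [one_mul, pow_eq_one_of_even hb (by decide)]
    exact .one_left c
  commute_a_bc := .one_left _
  comm_pow := by simp [hb]

theorem relations_edge {p q : ℕ} (m : ℕ) {a c : G} (ha : a ^ 2 = 1) (hc : c ^ 2 = 1)
    (hac : (a * c) ^ 2 = 1) (hp : Even p) (hq : Even q) : Relations p q m a 1 c where
  a_sq := ha
  b_sq := one_pow 2
  c_sq := hc
  ab_pow := by rw [mul_one, pow_eq_one_of_even ha hp]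
  bc_pow := by rw [one_mul, pow_eq_one_of_even hc hq]
  ac_sq := hac
  commute_ab_c := by
    rw [mul_one, pow_eq_one_of_even ha (by decide)]
    exact .one_left c
  commute_a_bc := by
    rw [one_mul, pow_eq_one_of_even hc (by decide)]
    exact .one_right a
  comm_pow := by simp [ha]

namespace Relations

variable {p q m : ℕ} {a b c : G}

theorem commute_ac (h : Relations p q m a b c) : Commute a c :=
  commute_of_mul_sq_eq_one h.a_sq h.c_sq h.ac_sq

theorem translV_pow (h : Relations p q m a b c) : translV a b c ^ (2 * m) = 1 := by
  rw [pow_mul, translV_sq h.a_sq h.b_sq h.c_sq h.ac_sq, h.comm_pow]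

theorem translU_pow (h : Relations p q m a b c) : translU a b c ^ (2 * m) = 1 := by
  have hconj := (semiconjBy_translV_translU (a := a) (c := c) h.b_sq).pow_right (2 * m)
  rw [h.translV_pow] at hconj
  exact (hconj.eq_one_iff b).1 rfl

theorem quotient_four_four (h : Relations p q m a b c) (N : Subgroup G) [N.Normal]
    (hab : (a * b) ^ 4 ∈ N) (hbc : (b * c) ^ 4 ∈ N) :
    Relations 4 4 m (mk' N a) (mk' N b) (mk' N c) where
  a_sq := by rw [← map_pow, h.a_sq, map_one]
  b_sq := by rw [← map_pow, h.b_sq, map_one]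
  c_sq := by rw [← map_pow, h.c_sq, map_one]
  ab_pow := by rwa [← map_mul, ← map_pow, mk'_apply, eq_one_iff]
  bc_pow := by rwa [← map_mul, ← map_pow, mk'_apply, eq_one_iff]
  ac_sq := by rw [← map_mul, ← map_pow, h.ac_sq, map_one]
  commute_ab_c := by simpa only [map_mul, map_pow] using h.commute_ab_c.map (mk' N)
  commute_a_bc := by simpa only [map_mul, map_pow] using h.commute_a_bc.map (mk' N)
  comm_pow := by simpa only [map_mul, map_pow, map_inv, map_one] using congrArg (mk' N) h.comm_pow

theorem commute_a_translV (h : Relations 4 4 m a b c) : Commute a (translV a b c) :=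
  (commute_conj_of_mul_pow_four_eq_one h.a_sq h.b_sq h.ab_pow).mul_right h.commute_ac

theorem semiconjBy_a_translU (h : Relations 4 4 m a b c) :
    SemiconjBy a (translU a b c) (translU a b c)⁻¹ :=
  semiconjBy_left_mul_inv h.a_sq (conj_sq_eq_one h.c_sq h.b_sq)

theorem commute_c_translU (h : Relations 4 4 m a b c) : Commute c (translU a b c) := by
  have hcb : (c * b) ^ 4 = 1 := by
    rw [← inv_eq_self_of_sq_eq_one h.c_sq, ← inv_eq_self_of_sq_eq_one h.b_sq, ← mul_inv_rev,
      inv_pow, h.bc_pow, inv_one]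
  exact h.commute_ac.symm.mul_right (commute_conj_of_mul_pow_four_eq_one h.c_sq h.b_sq hcb)

theorem semiconjBy_c_translV (h : Relations 4 4 m a b c) :
    SemiconjBy c (translV a b c) (translV a b c)⁻¹ :=
  semiconjBy_right_mul_inv (conj_sq_eq_one h.a_sq h.b_sq) h.c_sq

theorem commute_translU_translV (h : Relations 4 4 m a b c) :
    Commute (translU a b c) (translV a b c) := by
  have hbcb : SemiconjBy (b * c * b) (translV a b c) (translV a b c) :=
    ((semiconjBy_translU_translV h.b_sq).mul_left h.commute_c_translU).mul_left
      (semiconjBy_translV_translU h.b_sq)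
  exact SemiconjBy.mul_left h.commute_a_translV hbcb

theorem normal_translations (h : Relations 4 4 m a b c) (hgen : closure {a, b, c} = ⊤) :
    (zpowers (translU a b c) ⊔ zpowers (translV a b c)).Normal := by
  refine normal_of_closure_eq_top hgen ?_
  rintro _ (rfl | rfl | rfl) <;> rw [mem_normalizer_iff_map_conj_eq, Subgroup.map_sup]
  · rw [map_conj_zpowers h.semiconjBy_a_translU, map_conj_zpowers h.commute_a_translV, zpowers_inv]
  · rw [map_conj_zpowers (semiconjBy_translU_translV h.b_sq),
      map_conj_zpowers (semiconjBy_translV_translU h.b_sq), sup_comm]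
  · rw [map_conj_zpowers h.commute_c_translU, map_conj_zpowers h.semiconjBy_c_translV, zpowers_inv]

theorem closure_sup_translations (h : Relations 4 4 m a b c) (hgen : closure {a, b, c} = ⊤) :
    closure {b, c} ⊔ (zpowers (translU a b c) ⊔ zpowers (translV a b c)) = ⊤ := by
  set S := closure {b, c} ⊔ (zpowers (translU a b c) ⊔ zpowers (translV a b c))
  have hb : b ∈ S := mem_sup_left (mem_closure_of_mem (by simp))
  have hc : c ∈ S := mem_sup_left (mem_closure_of_mem (by simp))
  have hu : translU a b c ∈ S := mem_sup_right (mem_sup_left (mem_zpowers _))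
  rw [eq_top_iff, ← hgen, closure_le]
  rintro _ (rfl | rfl | rfl)
  · exact (mul_mem_cancel_right (mul_mem (mul_mem hb hc) hb)).1 hu
  · exact hb
  · exact hc

theorem isSolvable_of_four_four (h : Relations 4 4 m a b c) (hgen : closure {a, b, c} = ⊤) :
    Group.IsSolvable G := by
  have := h.normal_translations hgen
  have := isSolvable_closure_pair h.b_sq h.c_sq
  have := isSolvable_zpowers_sup_zpowers
    (mem_normalizer_zpowers (.inl h.commute_translU_translV.symm))
  have htop := isSolvable_sup (H := closure {b, c})
    (N := zpowers (translU a b c) ⊔ zpowers (translV a b c)) le_normalizer_of_normal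
  rw [h.closure_sup_translations hgen] at htop
  exact Group.isSolvable_of_surjective (f := (topEquiv : (⊤ : Subgroup G) ≃* G).toMonoidHom)
    topEquiv.surjective

theorem exists_word_of_four_four (h : Relations 4 4 m a b c) (hgen : closure {a, b, c} = ⊤)
    (g : G) :
    ∃ j k : ℤ, ∃ w ∈ closure {b, c}, g = translU a b c ^ j * translV a b c ^ k * w := by
  have := h.normal_translations hgen
  have hg : g ∈ closure {b, c} ⊔ (zpowers (translU a b c) ⊔ zpowers (translV a b c)) :=
    h.closure_sup_translations hgen ▸ mem_top g
  rw [sup_comm] at hg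
  obtain ⟨x, hx, w, hw, rfl⟩ := mem_sup_of_normal_left.1 hg
  obtain ⟨j, k, rfl⟩ := exists_zpow_mul_zpow_of_mem_sup
    (mem_normalizer_zpowers (.inl h.commute_translU_translV.symm)) hx
  exact ⟨j, k, w, hw, rfl⟩

theorem normal_zpowers_ab (h : Relations p q m a b c) (hgen : closure {a, b, c} = ⊤) :
    (zpowers ((a * b) ^ 4)).Normal := by
  refine normal_of_closure_eq_top hgen ?_
  rintro _ (rfl | rfl | rfl) <;> apply mem_normalizer_zpowers
  · rw [← inv_pow]
    exact .inr ((semiconjBy_left_mul_inv h.a_sq h.b_sq).pow_right 4)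
  · rw [← inv_pow]
    exact .inr ((semiconjBy_right_mul_inv h.a_sq h.b_sq).pow_right 4)
  · exact .inl h.commute_ab_c.symm

theorem normal_zpowers_bc (h : Relations p q m a b c) (hgen : closure {a, b, c} = ⊤) :
    (zpowers ((b * c) ^ 4)).Normal := by
  refine normal_of_closure_eq_top hgen ?_
  rintro _ (rfl | rfl | rfl) <;> apply mem_normalizer_zpowers
  · exact .inl h.commute_a_bc
  · rw [← inv_pow]
    exact .inr ((semiconjBy_left_mul_inv h.b_sq h.c_sq).pow_right 4)
  · rw [← inv_pow]
    exact .inr ((semiconjBy_right_mul_inv h.b_sq h.c_sq).pow_right 4)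

theorem isSolvable (h : Relations p q m a b c) (hgen : closure {a, b, c} = ⊤) :
    Group.IsSolvable G := by
  have := h.normal_zpowers_ab hgen
  have := h.normal_zpowers_bc hgen
  have := isSolvable_zpowers ((a * b) ^ 4)
  have := isSolvable_zpowers ((b * c) ^ 4)
  rw [Group.isSolvable_iff_subgroup_quotient (zpowers ((b * c) ^ 4) ⊔ zpowers ((a * b) ^ 4))]
  exact ⟨isSolvable_sup le_normalizer_of_normal,
    (h.quotient_four_four _ (mem_sup_right (mem_zpowers _))
      (mem_sup_left (mem_zpowers _))).isSolvable_of_four_four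
      (closure_map_eq_top (mk'_surjective _) hgen)⟩

theorem exists_word (h : Relations p q m a b c) (hgen : closure {a, b, c} = ⊤) (g : G) :
    ∃ j k i : ℤ, ∃ w ∈ closure {b, c},
      g = translU a b c ^ j * translV a b c ^ k * w * ((a * b) ^ 4) ^ i := by
  have := h.normal_zpowers_ab hgen
  have := h.normal_zpowers_bc hgen
  set N := zpowers ((b * c) ^ 4) ⊔ zpowers ((a * b) ^ 4)
  have hbar := h.quotient_four_four N (mem_sup_right (mem_zpowers _)) (mem_sup_left (mem_zpowers _))
  obtain ⟨j, k, wbar, hwbar, hg⟩ :=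
    hbar.exists_word_of_four_four (closure_map_eq_top (mk'_surjective _) hgen) (mk' N g)
  rw [← Set.image_pair, ← MonoidHom.map_closure] at hwbar
  obtain ⟨w, hw, rfl⟩ := hwbar
  simp only [← map_translU, ← map_translV, ← map_zpow, ← map_mul] at hg
  rw [eq_comm, mk'_eq_mk'] at hg
  obtain ⟨y, hy, rfl⟩ := hg
  obtain ⟨_, ⟨l, rfl⟩, _, ⟨i, rfl⟩, rfl⟩ := mem_sup_of_normal_left.1 hy
  have hbc : b * c ∈ closure {b, c} :=
    mul_mem (mem_closure_of_mem (by simp)) (mem_closure_of_mem (by simp))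
  refine ⟨j, k, i, w * ((b * c) ^ 4) ^ l, mul_mem hw (zpow_mem (pow_mem hbc 4) l), ?_⟩
  simp only [mul_assoc]

end Relations

end Relations

section Torus

variable (R : Type*) [AddCommGroupWithOne R]

/-- The reflection `(x, y) ↦ (1 - x, y)` of the torus `R × R`. With `torusB` and `torusC` it
generates the symmetry group of the square tessellation, with coordinates read in `R`. -/
def torusA : Equiv.Perm (R × R) := (Equiv.subLeft 1).prodCongr (Equiv.refl R)

/-- The reflection `(x, y) ↦ (y, x)` of the torus `R × R`. -/
def torusB : Equiv.Perm (R × R) := Equiv.prodComm R R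

/-- The reflection `(x, y) ↦ (x, -y)` of the torus `R × R`. -/
def torusC : Equiv.Perm (R × R) := (Equiv.refl R).prodCongr (Equiv.neg R)

variable {R}

theorem translU_torus : translU (torusA R) (torusB R) (torusC R) = Equiv.addLeft (1, 0) := by
  ext z <;> simp [translU, torusA, torusB, torusC]

theorem translV_torus : translV (torusA R) (torusB R) (torusC R) = Equiv.addLeft (0, 1) := by
  ext z <;> simp [translV, torusA, torusB, torusC]

theorem torusA_mul_torusB_pow_four : (torusA R * torusB R) ^ 4 = 1 := by
  ext z <;> simp [pow_succ, torusA, torusB]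

theorem torusB_mul_torusC_pow_four : (torusB R * torusC R) ^ 4 = 1 := by
  ext z <;> simp [pow_succ, torusB, torusC]

theorem relations_torus {p q m : ℕ} (hp : 4 ∣ p) (hq : 4 ∣ q) (hm : ((2 * m : ℕ) : R) = 0) :
    Relations p q m (torusA R) (torusB R) (torusC R) := by
  have ha : torusA R ^ 2 = 1 := by ext z <;> simp [sq, torusA]
  have hb : torusB R ^ 2 = 1 := by ext z <;> simp [sq, torusB]
  have hc : torusC R ^ 2 = 1 := by ext z <;> simp [sq, torusC]
  have hac : (torusA R * torusC R) ^ 2 = 1 := by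
    ext z <;> simp [sq, torusA, torusC]
  exact {
    a_sq := ha
    b_sq := hb
    c_sq := hc
    ab_pow := orderOf_dvd_iff_pow_eq_one.1
      ((orderOf_dvd_of_pow_eq_one torusA_mul_torusB_pow_four).trans hp)
    bc_pow := orderOf_dvd_iff_pow_eq_one.1
      ((orderOf_dvd_of_pow_eq_one torusB_mul_torusC_pow_four).trans hq)
    ac_sq := hac
    commute_ab_c := by
      rw [torusA_mul_torusB_pow_four]
      exact .one_left _
    commute_a_bc := by
      rw [torusB_mul_torusC_pow_four]
      exact .one_right _
    comm_pow := by
      rw [← translV_sq ha hb hc hac, ← pow_mul, translV_torus, Equiv.nsmul_addLeft, Prod.smul_mk,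
        smul_zero, nsmul_one, hm]
      exact Equiv.addLeft_zero }

end Torus

section MapGroup

open Subgroup DihedralGroup

/-- The relators of the paper, with arbitrary exponents `p`, `q`, `m` in place of `2 ^ s * ℓ₁`,
`2 ^ t * ℓ₂` and `2 ^ ((n - s - t - 1) / 2)`. -/
def relators (p q m : ℕ) : Set (FreeGroup (Fin 3)) :=
  {r0 ^ 2, r1 ^ 2, r2 ^ 2, (r0 * r1) ^ p, (r1 * r2) ^ q, (r0 * r2) ^ 2,
   pc ((r0 * r1) ^ 4) r2, pc r0 ((r1 * r2) ^ 4), (pc ((r0 * r1) ^ 2) r2) ^ m}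

/-- The universal group with three generators satisfying `Relations p q m`. -/
abbrev MapGroup (p q m : ℕ) : Type := PresentedGroup (relators p q m)

/-- The `i`-th generator of `MapGroup p q m`. -/
def gen {p q m : ℕ} (i : Fin 3) : MapGroup p q m := PresentedGroup.of i

variable {p q m : ℕ} {K : Type*} [Group K]

theorem inv_mul_inv_mul_mul_eq_one_iff_commute {x y : K} : x⁻¹ * y⁻¹ * x * y = 1 ↔ Commute x y := by
  rw [mul_assoc, ← mul_inv_rev, inv_mul_eq_one, eq_comm, commute_iff_eq]

theorem relations_iff {a b c : K} :
    Relations p q m a b c ↔ ∀ w ∈ relators p q m, FreeGroup.lift ![a, b, c] w = 1 := by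
  simp only [relators, Set.mem_insert_iff, Set.mem_singleton_iff, forall_eq_or_imp, forall_eq,
    pc, r0, r1, r2, map_mul, map_pow, map_inv, FreeGroup.lift_apply_of, Matrix.cons_val,
    inv_mul_inv_mul_mul_eq_one_iff_commute]
  exact ⟨fun ⟨h₁, h₂, h₃, h₄, h₅, h₆, h₇, h₈, h₉⟩ => ⟨h₁, h₂, h₃, h₄, h₅, h₆, h₇, h₈, h₉⟩,
    fun ⟨h₁, h₂, h₃, h₄, h₅, h₆, h₇, h₈, h₉⟩ => ⟨h₁, h₂, h₃, h₄, h₅, h₆, h₇, h₈, h₉⟩⟩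

/-- The homomorphism out of `MapGroup p q m` given by its universal property. -/
def Relations.lift {a b c : K} (h : Relations p q m a b c) : MapGroup p q m →* K :=
  PresentedGroup.toGroup (relations_iff.1 h)

theorem Relations.lift_gen {a b c : K} (h : Relations p q m a b c) (i : Fin 3) :
    h.lift (gen i) = ![a, b, c] i :=
  PresentedGroup.toGroup.of _

theorem relations_gen : Relations p q m (gen 0 : MapGroup p q m) (gen 1) (gen 2) := by
  have hmk : FreeGroup.lift ![gen 0, gen 1, gen 2] = PresentedGroup.mk (relators p q m) := by
    ext i
    fin_cases i <;> exact FreeGroup.lift_apply_of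
  rw [relations_iff, hmk]
  exact fun w hw => PresentedGroup.one_of_mem hw

theorem closure_gen : closure {(gen 0 : MapGroup p q m), gen 1, gen 2} = ⊤ := by
  rw [← PresentedGroup.closure_range_of]
  congr 1
  ext z
  simp [gen, Fin.exists_fin_succ, eq_comm]

theorem sr_sq {k : ℕ} (i : ZMod k) : sr i ^ 2 = 1 := by
  rw [sq, sr_mul_self]

theorem sr_zero_mul_sr_one_pow (k : ℕ) : (sr 0 * sr 1 : DihedralGroup k) ^ k = 1 := by
  rw [sr_mul_sr, sub_zero, r_one_pow_n]

/-- The projection of `MapGroup p q m` onto the dihedral group generated by the images of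
`gen 0` and `gen 1`. -/
def toFace (m : ℕ) (hq : Even q) : MapGroup p q m →* DihedralGroup p :=
  (relations_face m (sr_sq 0) (sr_sq 1) (sr_zero_mul_sr_one_pow p) hq).lift

/-- The projection of `MapGroup p q m` onto the dihedral group generated by the images of
`gen 1` and `gen 2`. -/
def toVertex (m : ℕ) (hp : Even p) : MapGroup p q m →* DihedralGroup q :=
  (relations_vertex m (sr_sq 0) (sr_sq 1) (sr_zero_mul_sr_one_pow q) hp).lift

/-- The action of `MapGroup p q m` on the square torus of side `2 * m`. -/
def toTorus (m : ℕ) (hp : 4 ∣ p) (hq : 4 ∣ q) :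
    MapGroup p q m →* Equiv.Perm (ZMod (2 * m) × ZMod (2 * m)) :=
  (relations_torus hp hq (ZMod.natCast_self (2 * m))).lift

theorem toFace_gen (hq : Even q) (i : Fin 3) :
    toFace (p := p) m hq (gen i) = ![sr 0, sr 1, 1] i :=
  Relations.lift_gen _ i

theorem toVertex_gen (hp : Even p) (i : Fin 3) :
    toVertex (q := q) m hp (gen i) = ![1, sr 0, sr 1] i :=
  Relations.lift_gen _ i

theorem toTorus_gen (hp : 4 ∣ p) (hq : 4 ∣ q) (i : Fin 3) :
    toTorus m hp hq (gen i) = ![torusA _, torusB _, torusC _] i :=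
  Relations.lift_gen _ i

section Order

theorem orderOf_gen_zero (hq : Even q) : orderOf (gen 0 : MapGroup p q m) = 2 :=
  orderOf_eq_of_orderOf_map (toFace m hq) relations_gen.a_sq
    (by simp [toFace_gen, orderOf_sr])

theorem orderOf_gen_one (hq : Even q) : orderOf (gen 1 : MapGroup p q m) = 2 :=
  orderOf_eq_of_orderOf_map (toFace m hq) relations_gen.b_sq
    (by simp [toFace_gen, orderOf_sr])

theorem orderOf_gen_two (hp : Even p) : orderOf (gen 2 : MapGroup p q m) = 2 :=
  orderOf_eq_of_orderOf_map (toVertex m hp) relations_gen.c_sq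
    (by simp [toVertex_gen, orderOf_sr])

theorem orderOf_gen_zero_mul_gen_two (hq : Even q) :
    orderOf (gen 0 * gen 2 : MapGroup p q m) = 2 :=
  orderOf_eq_of_orderOf_map (toFace m hq) relations_gen.ac_sq
    (by simp [toFace_gen, orderOf_sr])

theorem orderOf_gen_zero_mul_gen_one (hq : Even q) :
    orderOf (gen 0 * gen 1 : MapGroup p q m) = p :=
  orderOf_eq_of_orderOf_map (toFace m hq) relations_gen.ab_pow
    (by simp [toFace_gen])

theorem orderOf_gen_one_mul_gen_two (hp : Even p) :
    orderOf (gen 1 * gen 2 : MapGroup p q m) = q :=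
  orderOf_eq_of_orderOf_map (toVertex m hp) relations_gen.bc_pow
    (by simp [toVertex_gen])

theorem even_of_four_dvd {k : ℕ} (hk : 4 ∣ k) : Even k :=
  even_iff_two_dvd.2 (dvd_trans (by decide) hk)

theorem card_zpowers_gen_zero_mul_gen_one_pow_four (hp : 4 ∣ p) (hq : 4 ∣ q) :
    Nat.card (zpowers ((gen 0 * gen 1 : MapGroup p q m) ^ 4)) = p / 4 := by
  rw [Nat.card_zpowers, orderOf_pow' _ four_ne_zero,
    orderOf_gen_zero_mul_gen_one (even_of_four_dvd hq), Nat.gcd_eq_right hp]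

theorem toTorus_transl_apply_zero (hp : 4 ∣ p) (hq : 4 ∣ q) (j k : ℤ) :
    toTorus m hp hq (translU (gen 0) (gen 1) (gen 2) ^ j * translV (gen 0) (gen 1) (gen 2) ^ k) 0 =
      (↑j, ↑k) := by
  rw [map_mul, map_zpow, map_zpow, map_translU, map_translV]
  simp [toTorus_gen, translU_torus, translV_torus]

/-- The stabilizer of the vertex `0` of the torus. -/
def vertexStabilizer (m : ℕ) (hp : 4 ∣ p) (hq : 4 ∣ q) : Subgroup (MapGroup p q m) :=
  (MulAction.stabilizer _ (0 : ZMod (2 * m) × ZMod (2 * m))).comap (toTorus m hp hq)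

theorem mem_vertexStabilizer {hp : 4 ∣ p} {hq : 4 ∣ q} {g : MapGroup p q m} :
    g ∈ vertexStabilizer m hp hq ↔ toTorus m hp hq g 0 = 0 :=
  Iff.rfl

theorem index_vertexStabilizer (hp : 4 ∣ p) (hq : 4 ∣ q) :
    (vertexStabilizer m hp hq).index = (2 * m) ^ 2 := by
  rw [vertexStabilizer, index_comap_stabilizer, Nat.card_prod, Nat.card_zmod, sq]
  rintro ⟨y, z⟩
  obtain ⟨j, rfl⟩ := ZMod.intCast_surjective y
  obtain ⟨k, rfl⟩ := ZMod.intCast_surjective z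
  exact ⟨_, toTorus_transl_apply_zero hp hq j k⟩

theorem closure_gen_one_gen_two_le_vertexStabilizer (hp : 4 ∣ p) (hq : 4 ∣ q) :
    closure {gen 1, gen 2} ≤ vertexStabilizer m hp hq := by
  rw [closure_le]
  rintro _ (rfl | rfl) <;> rw [SetLike.mem_coe, mem_vertexStabilizer]
  · simp [toTorus_gen, torusB]
  · simp [toTorus_gen, torusC, Prod.map_apply']

theorem gen_zero_mul_gen_one_pow_four_mem_vertexStabilizer (hp : 4 ∣ p) (hq : 4 ∣ q) :
    (gen 0 * gen 1) ^ 4 ∈ vertexStabilizer m hp hq := by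
  have h : toTorus m hp hq ((gen 0 * gen 1) ^ 4) = 1 := by
    simpa [toTorus_gen] using torusA_mul_torusB_pow_four
  rw [mem_vertexStabilizer, h, Equiv.Perm.one_apply]

theorem map_vertexStabilizer (hp : 4 ∣ p) (hq : 4 ∣ q) :
    (vertexStabilizer m hp hq).map (toVertex m (even_of_four_dvd hp)) = ⊤ := by
  rw [eq_top_iff, ← closure_sr_zero_sr_one]
  refine le_trans (le_of_eq ?_) (map_mono (closure_gen_one_gen_two_le_vertexStabilizer hp hq))
  rw [MonoidHom.map_closure, Set.image_pair]
  simp [toVertex_gen]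

theorem exists_mul_zpow_of_mem_vertexStabilizer {hp : 4 ∣ p} {hq : 4 ∣ q} {g : MapGroup p q m}
    (hg : g ∈ vertexStabilizer m hp hq) :
    ∃ w ∈ closure {gen 1, gen 2}, ∃ i : ℤ, g = w * ((gen 0 * gen 1) ^ 4) ^ i := by
  have hrel := relations_gen (p := p) (q := q) (m := m)
  obtain ⟨j, k, i, w, hw, rfl⟩ := hrel.exists_word closure_gen g
  have hfix := mul_mem (closure_gen_one_gen_two_le_vertexStabilizer hp hq hw)
    (zpow_mem (gen_zero_mul_gen_one_pow_four_mem_vertexStabilizer hp hq) i)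
  rw [mul_assoc, mul_mem_cancel_right hfix, mem_vertexStabilizer, toTorus_transl_apply_zero,
    Prod.mk_eq_zero, CharP.intCast_eq_zero_iff _ (2 * m), CharP.intCast_eq_zero_iff _ (2 * m)] at hg
  have hu := orderOf_dvd_iff_zpow_eq_one.1
    ((Int.natCast_dvd_natCast.2 (orderOf_dvd_of_pow_eq_one hrel.translU_pow)).trans hg.1)
  have hv := orderOf_dvd_iff_zpow_eq_one.1
    ((Int.natCast_dvd_natCast.2 (orderOf_dvd_of_pow_eq_one hrel.translV_pow)).trans hg.2)
  exact ⟨w, hw, i, by rw [hu, hv, one_mul, one_mul]⟩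

theorem vertexStabilizer_inf_ker_toVertex (hp : 4 ∣ p) (hq : 4 ∣ q) :
    vertexStabilizer m hp hq ⊓ (toVertex m (even_of_four_dvd hp)).ker =
      zpowers ((gen 0 * gen 1) ^ 4) := by
  have hx : (gen 0 * gen 1) ^ 4 ∈ (toVertex (p := p) (q := q) m (even_of_four_dvd hp)).ker := by
    rw [MonoidHom.mem_ker, map_pow, map_mul]
    simpa [toVertex_gen] using pow_eq_one_of_even (sr_sq 0) (by decide : Even 4)
  refine le_antisymm (fun g hg => ?_) (le_inf ?_ (zpowers_le.2 hx))
  · obtain ⟨w, hw, i, rfl⟩ := exists_mul_zpow_of_mem_vertexStabilizer hg.1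
    have hw_ker := (mul_mem_cancel_right (zpow_mem hx i)).1 hg.2
    have hw_one : w = 1 := eq_one_of_map_dihedralGroup_eq_one relations_gen.b_sq relations_gen.c_sq
      relations_gen.bc_pow (toVertex m (even_of_four_dvd hp)) (toVertex_gen _ 1)
      (toVertex_gen _ 2) hw hw_ker
    rw [hw_one, one_mul]
    exact zpow_mem (mem_zpowers _) i
  · exact zpowers_le.2 (gen_zero_mul_gen_one_pow_four_mem_vertexStabilizer hp hq)

theorem card_mapGroup (hp : 4 ∣ p) (hq : 4 ∣ q) :
    Nat.card (MapGroup p q m) = 2 * p * q * m ^ 2 := by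
  rw [card_eq_card_inf_ker_mul_card_map_mul_index (vertexStabilizer m hp hq)
      (toVertex m (even_of_four_dvd hp)),
    vertexStabilizer_inf_ker_toVertex, map_vertexStabilizer, index_vertexStabilizer,
    card_zpowers_gen_zero_mul_gen_one_pow_four hp hq, card_top, DihedralGroup.nat_card]
  obtain ⟨k, rfl⟩ := hp
  rw [Nat.mul_div_cancel_left _ four_pos]
  ring

end Order

section IntersectionProperty

theorem interProp_of_retractions {G : Type*} [Group G] {ρ : Fin 3 → G}
    (h : ∀ I : Set (Fin 3), ∃ f : G →* G, ∀ i, f (ρ i) = I.mulIndicator ρ i) : InterProp ρ := by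
  intro I J
  refine le_antisymm ?_ (le_inf (closure_mono (Set.image_mono Set.inter_subset_left))
    (closure_mono (Set.image_mono Set.inter_subset_right)))
  rintro x ⟨hI, hJ⟩
  obtain ⟨f, hf⟩ := h I
  have hfix : f x = x := by
    refine MonoidHom.eqOn_closure (f := f) (g := MonoidHom.id G) ?_ hI
    rintro _ ⟨i, hi, rfl⟩
    rw [hf, Set.mulIndicator_of_mem hi, MonoidHom.id_apply]
  have hmaps : closure (ρ '' J) ≤ (closure (ρ '' (I ∩ J))).comap f := by
    rw [closure_le]
    rintro _ ⟨i, hi, rfl⟩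
    rw [SetLike.mem_coe, mem_comap, hf]
    by_cases hiI : i ∈ I
    · rw [Set.mulIndicator_of_mem hiI]
      exact mem_closure_of_mem (Set.mem_image_of_mem ρ ⟨hiI, hi⟩)
    · rw [Set.mulIndicator_of_notMem hiI]
      exact one_mem _
  exact hfix ▸ hmaps hJ

theorem relations_mulIndicator {G : Type*} [Group G] {ρ : Fin 3 → G} (hp : Even p) (hq : Even q)
    (h : Relations p q m (ρ 0) (ρ 1) (ρ 2)) (I : Set (Fin 3)) :
    Relations p q m (I.mulIndicator ρ 0) (I.mulIndicator ρ 1) (I.mulIndicator ρ 2) := by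
  have h₀ : Relations p q m (I.mulIndicator ρ 0) (ρ 1) (ρ 2) := by
    rcases Set.mulIndicator_eq_one_or_self I ρ 0 with h' | h' <;> rw [h']
    · exact relations_vertex m h.b_sq h.c_sq h.bc_pow hp
    · exact h
  have h₁ : Relations p q m (I.mulIndicator ρ 0) (I.mulIndicator ρ 1) (ρ 2) := by
    rcases Set.mulIndicator_eq_one_or_self I ρ 1 with h' | h' <;> rw [h']
    · exact relations_edge m h₀.a_sq h₀.c_sq h₀.ac_sq hp hq
    · exact h₀
  rcases Set.mulIndicator_eq_one_or_self I ρ 2 with h' | h' <;> rw [h']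
  · exact relations_face m h₁.a_sq h₁.b_sq h₁.ab_pow hq
  · exact h₁

theorem interProp_gen (hp : Even p) (hq : Even q) : InterProp (gen : Fin 3 → MapGroup p q m) := by
  refine interProp_of_retractions fun I => ?_
  refine ⟨(relations_mulIndicator hp hq relations_gen I).lift, fun i => ?_⟩
  rw [Relations.lift_gen]
  fin_cases i <;> rfl

end IntersectionProperty

end MapGroup

/-- As for `Nat.card` and `orderOf`, the value `0` of `p`, `q` or `m` stands for infinity. -/
theorem stmt_9_general (p q m : ℕ) (hp : 4 ∣ p) (hq : 4 ∣ q) :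
    Nat.card (MapGroup p q m) = 2 * p * q * m ^ 2 ∧
    Group.IsSolvable (MapGroup p q m) ∧
    orderOf (gen 0 : MapGroup p q m) = 2 ∧ orderOf (gen 1 : MapGroup p q m) = 2 ∧
    orderOf (gen 2 : MapGroup p q m) = 2 ∧ orderOf (gen 0 * gen 2 : MapGroup p q m) = 2 ∧
    orderOf (gen 0 * gen 1 : MapGroup p q m) = p ∧
    orderOf (gen 1 * gen 2 : MapGroup p q m) = q ∧
    InterProp ![(gen 0 : MapGroup p q m), gen 1, gen 2] := by
  have hp' := even_of_four_dvd hp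
  have hq' := even_of_four_dvd hq
  have hgen : ![(gen 0 : MapGroup p q m), gen 1, gen 2] = gen := FinVec.etaExpand_eq gen
  exact ⟨card_mapGroup hp hq, relations_gen.isSolvable closure_gen, orderOf_gen_zero hq',
    orderOf_gen_one hq', orderOf_gen_two hp', orderOf_gen_zero_mul_gen_two hq',
    orderOf_gen_zero_mul_gen_one hq', orderOf_gen_one_mul_gen_two hp',
    hgen ▸ interProp_gen hp' hq'⟩

/-- Theorem 4.1, case `n - s - t` odd: the group `G` is a solvable string C-group of
order `2^n ℓ1 ℓ2` and Schläfli type `{2^s ℓ1, 2^t ℓ2}`. -/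
theorem stmt_9 (s t n l1 l2 : ℕ) (hs : 2 ≤ s) (ht : 2 ≤ t) (hn : s + t + 1 ≤ n)
    (hnst : Odd (n - s - t)) (hl1 : Odd l1) (hl2 : Odd l2)
    (hl1' : 0 < l1) (hl2' : 0 < l2) :
    Nat.card (PresentedGroup (rels s t n l1 l2)) = 2 ^ n * l1 * l2 ∧
    IsSolvable (PresentedGroup (rels s t n l1 l2)) ∧
    orderOf (g s t n l1 l2 0) = 2 ∧ orderOf (g s t n l1 l2 1) = 2 ∧
    orderOf (g s t n l1 l2 2) = 2 ∧
    orderOf (g s t n l1 l2 0 * g s t n l1 l2 2) = 2 ∧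
    orderOf (g s t n l1 l2 0 * g s t n l1 l2 1) = 2 ^ s * l1 ∧
    orderOf (g s t n l1 l2 1 * g s t n l1 l2 2) = 2 ^ t * l2 ∧
    InterProp ![g s t n l1 l2 0, g s t n l1 l2 1, g s t n l1 l2 2] := by
  have hp : 4 ∣ 2 ^ s * l1 := Dvd.dvd.mul_right (pow_dvd_pow 2 hs) l1
  have hq : 4 ∣ 2 ^ t * l2 := Dvd.dvd.mul_right (pow_dvd_pow 2 ht) l2
  obtain ⟨hcard, hrest⟩ := stmt_9_general _ _ (2 ^ ((n - s - t - 1) / 2)) hp hq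
  have hexp : n = s + t + 1 + (n - s - t - 1) / 2 * 2 := by
    obtain ⟨k, hk⟩ := hnst
    omega
  refine ⟨hcard.trans ?_, hrest⟩
  conv_rhs => rw [hexp]
  ring

end Stmt9
end

section
/- Let s, t, n be integers with s ≥ 2, t ≥ 2, n ≥ s + t + 1 and n − s − t even, and let ℓ1, ℓ2 be odd positive integers. Let G be the presented group on generators ρ0, ρ1, ρ2 with relation set {ρ0^2, ρ1^2, ρ2^2, (ρ0ρ1)^{2^s·ℓ1}, (ρ1ρ2)^{2^t·ℓ2}, (ρ0ρ2)^2, [(ρ0ρ1)^4, ρ2], [ρ0, (ρ1ρ2)^4], [(ρ0ρ1)^2, (ρ1ρ2)^2]^{2^{(n−s−t−2)/2}}}, where [x, y] = x⁻¹y⁻¹xy. Then G has order 2^n · ℓ1 · ℓ2, G is solvable, in G the images of ρ0, ρ1, ρ2 and ρ0ρ2 have order exactly 2, the image of ρ0ρ1 has order exactly 2^s·ℓ1, the image of ρ1ρ2 has order exactly 2^t·ℓ2, and the triple of images of (ρ0, ρ1, ρ2) satisfies the intersection property in G. -/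
namespace Stmt10

def r0 : FreeGroup (Fin 3) := FreeGroup.of 0
def r1 : FreeGroup (Fin 3) := FreeGroup.of 1
def r2 : FreeGroup (Fin 3) := FreeGroup.of 2

/-- The commutator `[x, y] = x⁻¹ y⁻¹ x y` as used in the paper. -/
def pc (x y : FreeGroup (Fin 3)) : FreeGroup (Fin 3) := x⁻¹ * y⁻¹ * x * y

/-- The relations of the presented group `G` of Theorem 4.1, case `n - s - t` even. -/
def rels (s t n l1 l2 : ℕ) : Set (FreeGroup (Fin 3)) :=
  {r0 ^ 2, r1 ^ 2, r2 ^ 2,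
   (r0 * r1) ^ (2 ^ s * l1), (r1 * r2) ^ (2 ^ t * l2), (r0 * r2) ^ 2,
   pc ((r0 * r1) ^ 4) r2, pc r0 ((r1 * r2) ^ 4),
   (pc ((r0 * r1) ^ 2) ((r1 * r2) ^ 2)) ^ (2 ^ ((n - s - t - 2) / 2))}

/-- The image of the `i`-th generator. -/
def g (s t n l1 l2 : ℕ) (i : Fin 3) : PresentedGroup (rels s t n l1 l2) :=
  PresentedGroup.of i

/-- The intersection property for a triple of elements. -/
def InterProp {G : Type*} [Group G] (ρ : Fin 3 → G) : Prop :=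
  ∀ I J : Set (Fin 3),
    Subgroup.closure (ρ '' I) ⊓ Subgroup.closure (ρ '' J) =
      Subgroup.closure (ρ '' (I ∩ J))

/-!
Let `p`, `q`, `m` be the exponents of `ρ0 ρ1`, of `ρ1 ρ2` and of the commutator. Killing `ρ2`,
respectively `ρ0`, maps the group onto the dihedral groups of orders `2p` and `2q`. Together the two
maps have as image the fibre product of these dihedral groups over the sign of the common reflection
`ρ1`, which has order `2pq`, and their kernel is generated by the two elements `z = (ρ0 ρ1 ρ2 ρ1)²`
and `z' = (ρ2 ρ1 ρ0 ρ1)²`. These commute and each generator of the group sends `z` to one of `z`,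
`z⁻¹`, `z'⁻¹` by conjugation, so they generate an abelian normal subgroup; as `z z'⁻¹` is the
commutator of the last relation, the orders of `z` and `z z'⁻¹` divide `2m` and `m`. The symmetries
of a square tessellation of the torus `(ZMod (4m))²`, on which `z` and `z'` act as translations,
show that the kernel has order exactly `2m²`. Finally, replacing some of the generators by `1`
respects the relations, and these retractions give the intersection property.
-/

section Groups

variable {H K : Type*} [Group H] [Group K]

theorem orderOf_eq_of_orderOf_map {a : H} {k : ℕ} (f : H →* K) (ha : a ^ k = 1)
    (hf : orderOf (f a) = k) : orderOf a = k :=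
  Nat.dvd_antisymm (orderOf_dvd_of_pow_eq_one ha) (hf ▸ orderOf_map_dvd f a)

theorem conj_eq_self_iff_commute {a b : H} (ha : a * a = 1) : a * b * a = b ↔ Commute a b := by
  rw [commute_iff_eq, ← mul_inv_eq_iff_eq_mul, inv_eq_of_mul_eq_one_left ha]

theorem mul_sq_eq_one_iff_commute {a b : H} (ha : a * a = 1) (hb : b * b = 1) :
    (a * b) ^ 2 = 1 ↔ Commute a b := by
  rw [pow_two, mul_eq_one_iff_eq_inv, mul_inv_rev, inv_eq_of_mul_eq_one_left ha,
    inv_eq_of_mul_eq_one_left hb, commute_iff_eq]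

theorem inv_mul_inv_mul_mul_eq_one_iff_commute {a b : H} :
    a⁻¹ * b⁻¹ * a * b = 1 ↔ Commute a b := by
  rw [mul_assoc, ← mul_inv_rev, inv_mul_eq_one, eq_comm, commute_iff_eq]

theorem pow_eq_one_of_mul_self_eq_one {a : H} (ha : a * a = 1) {k : ℕ} (hk : 2 ∣ k) :
    a ^ k = 1 :=
  orderOf_dvd_iff_pow_eq_one.mp ((orderOf_dvd_of_pow_eq_one (by rw [pow_two, ha])).trans hk)

theorem normal_closure_of_involutions {T S : Set H} (hT : Subgroup.closure T = ⊤)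
    (hT2 : ∀ a ∈ T, a * a = 1) (hS : ∀ a ∈ T, ∀ s ∈ S, a * s * a ∈ Subgroup.closure S) :
    (Subgroup.closure S).Normal := by
  rw [← Subgroup.normalizer_eq_top_iff, eq_top_iff, ← hT, Subgroup.closure_le]
  intro a ha
  have inv_eq : a⁻¹ = a := inv_eq_of_mul_eq_one_left (hT2 a ha)
  have le_comap :
      Subgroup.closure S ≤ (Subgroup.closure S).comap (MulAut.conj a).toMonoidHom := by
    rw [Subgroup.closure_le]
    intro s hs
    simpa [inv_eq] using hS a ha s hs
  have conj_mem (b : H) (hb : b ∈ Subgroup.closure S) : a * b * a⁻¹ ∈ Subgroup.closure S := by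
    simpa using le_comap hb
  refine Subgroup.mem_normalizer_iff.mpr fun b => ⟨conj_mem b, fun hb => ?_⟩
  have key := conj_mem _ hb
  rwa [← mul_assoc, ← mul_assoc, hT2 a ha, one_mul, inv_eq, mul_assoc, hT2 a ha, mul_one] at key

theorem closure_inf_ker_le (f : H →* K) (σ : K →* H) {S : Set H} {N : Subgroup H} [N.Normal]
    (h : ∀ a ∈ S, (σ (f a))⁻¹ * a ∈ N) : Subgroup.closure S ⊓ f.ker ≤ N := by
  have agree : Set.EqOn (((QuotientGroup.mk' N).comp σ).comp f) (QuotientGroup.mk' N)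
      (Subgroup.closure S) :=
    MonoidHom.eqOn_closure fun a ha => QuotientGroup.eq.mpr (h a ha)
  rintro a ⟨haS, haf⟩
  rw [← QuotientGroup.eq_one_iff, ← QuotientGroup.mk'_apply, ← agree haS]
  simp [f.mem_ker.mp haf]

theorem disjoint_zpowers_of_map {a b : H} (f : H →* K) (ha : orderOf a = orderOf (f a))
    (hd : Disjoint (Subgroup.zpowers (f a)) (Subgroup.zpowers (f b))) :
    Disjoint (Subgroup.zpowers a) (Subgroup.zpowers b) := by
  rw [Subgroup.disjoint_def] at hd ⊢
  rintro _ ⟨i, rfl⟩ ⟨j, hj⟩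
  have map_eq_one : f a ^ i = 1 := hd ⟨i, rfl⟩ ⟨j, by simpa using congrArg f hj⟩
  rwa [← orderOf_dvd_iff_zpow_eq_one, ← ha, orderOf_dvd_iff_zpow_eq_one] at map_eq_one

theorem card_zpowers_sup_zpowers {a b : H} (hab : Commute a b)
    (hd : Disjoint (Subgroup.zpowers a) (Subgroup.zpowers b)) :
    Nat.card ↥(Subgroup.zpowers a ⊔ Subgroup.zpowers b) = orderOf a * orderOf b := by
  let A := Subgroup.zpowers a
  let B := Subgroup.zpowers b
  have comm (u : A) (v : B) : Commute (A.subtype u) (B.subtype v) := by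
    obtain ⟨⟨_, i, rfl⟩, ⟨_, j, rfl⟩⟩ := u, v
    exact hab.zpow_zpow i j
  have inj : Function.Injective (A.subtype.noncommCoprod B.subtype comm) :=
    (MonoidHom.noncommCoprod_injective ..).mpr
      ⟨A.subtype_injective, B.subtype_injective, by simpa using hd⟩
  rw [← Nat.card_zpowers a, ← Nat.card_zpowers b, ← Nat.card_prod,
    Nat.card_congr (MonoidHom.ofInjective inj).toEquiv, MonoidHom.noncommCoprod_range,
    A.range_subtype, B.range_subtype]

end Groups

section Dihedral

open DihedralGroup

variable {H : Type*} [Group H]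

theorem zpow_cast_intCast {a : H} {N : ℕ} (ha : a ^ N = 1) (k : ℤ) :
    a ^ ((k : ZMod N).cast : ℤ) = a ^ k := by
  rw [ZMod.coe_intCast, ← zpow_eq_zpow_emod' k ha]

theorem mul_zpow_mul_eq_mul_zpow_neg {a b : H} (ha : a * a = 1) (hb : b * b = 1) (k : ℤ) :
    (a * b) ^ k * a = a * (a * b) ^ (-k) := by
  rw [mul_zpow_mul, zpow_neg, ← inv_zpow, mul_inv_rev, inv_eq_of_mul_eq_one_left ha,
    inv_eq_of_mul_eq_one_left hb]

/-- The homomorphism out of a dihedral group sending the reflections `sr 0` and `sr 1`, which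
generate it, to two given involutions. -/
def dihedralLift {N : ℕ} {a b : H} (ha : a * a = 1) (hb : b * b = 1) (hab : (a * b) ^ N = 1) :
    DihedralGroup N →* H where
  toFun
    | r i => (a * b) ^ (i.cast : ℤ)
    | sr i => a * (a * b) ^ (i.cast : ℤ)
  map_one' := by simp [one_def, -r_zero]
  map_mul' := by
    have swap := mul_zpow_mul_eq_mul_zpow_neg ha hb
    rintro (i | i) (j | j) <;> obtain ⟨i, rfl⟩ := ZMod.intCast_surjective i <;>
      obtain ⟨j, rfl⟩ := ZMod.intCast_surjective j <;>
      simp only [r_mul_r, r_mul_sr, sr_mul_r, sr_mul_sr, ← Int.cast_add, ← Int.cast_sub,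
        zpow_cast_intCast hab]
    · rw [zpow_add]
    · rw [← mul_assoc, swap, mul_assoc, ← zpow_add, neg_add_eq_sub]
    · rw [zpow_add, mul_assoc]
    · rw [mul_assoc, ← mul_assoc _ a, swap, ← mul_assoc, ← mul_assoc, ha, one_mul, ← zpow_add,
        neg_add_eq_sub]

section

variable {N : ℕ} {a b : H} (ha : a * a = 1) (hb : b * b = 1) (hab : (a * b) ^ N = 1)

theorem dihedralLift_r (k : ℤ) : dihedralLift ha hb hab (r k) = (a * b) ^ k :=
  zpow_cast_intCast hab k

theorem dihedralLift_sr (k : ℤ) : dihedralLift ha hb hab (sr k) = a * (a * b) ^ k :=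
  congrArg (a * ·) (zpow_cast_intCast hab k)

@[simp]
theorem dihedralLift_sr_zero : dihedralLift ha hb hab (sr 0) = a := by
  simpa using dihedralLift_sr ha hb hab 0

@[simp]
theorem dihedralLift_sr_one : dihedralLift ha hb hab (sr 1) = b := by
  simpa [← mul_assoc, ha] using dihedralLift_sr ha hb hab 1

end

theorem isSolvable_dihedralGroup (N : ℕ) : Group.IsSolvable (DihedralGroup N) := by
  let det : DihedralGroup N →* ℤˣ :=
    dihedralLift (a := -1) (b := -1) (by simp) (by simp) (by simp)
  have ker_le : det.ker ≤ (zpowersHom (DihedralGroup N) (r 1)).range := by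
    rintro (i | i) hi <;> obtain ⟨k, rfl⟩ := ZMod.intCast_surjective i
    · exact ⟨Multiplicative.ofAdd k, r_one_zpow k⟩
    · simp [det, dihedralLift_sr] at hi
  exact Group.isSolvable_of_ker_le_range _ det ker_le

/-- The homomorphism sending the generator `sr 0` to `1` and the generator `sr 1` to `-1`; it
exists because `N` is even. -/
def parity {N : ℕ} (hN : 2 ∣ N) : DihedralGroup N →* ℤˣ :=
  dihedralLift (a := 1) (b := -1) (by simp) (by simp)
    (pow_eq_one_of_mul_self_eq_one (by simp) hN)

@[simp]
theorem parity_sr_zero {N : ℕ} (hN : 2 ∣ N) : parity hN (sr 0) = 1 := by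
  simp [parity]

@[simp]
theorem parity_sr_one {N : ℕ} (hN : 2 ∣ N) : parity hN (sr 1) = -1 := by
  simp [parity]

theorem ker_parity_le {N : ℕ} (hN : 2 ∣ N) :
    (parity hN).ker ≤ Subgroup.closure {sr 0, r 2} := by
  have r_mem {k : ℤ} (hk : Even k) : (r k : DihedralGroup N) ∈ Subgroup.closure {sr 0, r 2} := by
    obtain ⟨j, rfl⟩ := even_iff_two_dvd.mp hk
    have : (r ((2 * j : ℤ) : ZMod N) : DihedralGroup N) = r 2 ^ j := by rw [r_zpow]; push_cast; rfl
    exact this ▸ zpow_mem (Subgroup.subset_closure (by simp)) j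
  rintro (i | i) hi <;> obtain ⟨k, rfl⟩ := ZMod.intCast_surjective i
  · rw [MonoidHom.mem_ker, parity, dihedralLift_r, one_mul] at hi
    exact r_mem ((Int.negOnePow_eq_one_iff k).mp hi)
  · rw [MonoidHom.mem_ker, parity, dihedralLift_sr, one_mul, one_mul] at hi
    rw [← zero_add (k : ZMod N), ← sr_mul_r]
    exact mul_mem (Subgroup.subset_closure (by simp))
      (r_mem ((Int.negOnePow_eq_one_iff k).mp hi))

variable {N M : ℕ} (hN : 2 ∣ N) (hM : 2 ∣ M)

theorem card_ker_parity_coprod :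
    Nat.card ((parity hN).coprod (parity hM)).ker = 2 * N * M := by
  have surj : Function.Surjective ((parity hN).coprod (parity hM)) := fun c => by
    obtain rfl | rfl := Int.units_eq_one_or c
    · exact ⟨1, map_one _⟩
    · exact ⟨(sr 1, 1), by simp⟩
  have h := ((parity hN).coprod (parity hM)).ker.card_mul_index
  rw [Subgroup.index_ker, MonoidHom.range_eq_top.mpr surj, Subgroup.card_top, Nat.card_prod,
    DihedralGroup.nat_card, DihedralGroup.nat_card, Nat.card_eq_fintype_card (α := ℤˣ),
    Fintype.card_units_int] at h
  linarith

theorem ker_parity_coprod_eq_closure :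
    ((parity hN).coprod (parity hM)).ker =
      Subgroup.closure {(sr 0, 1), (sr 1, sr 1), (1, sr 0)} := by
  set C : Subgroup (DihedralGroup N × DihedralGroup M) :=
    Subgroup.closure {(sr 0, 1), (sr 1, sr 1), (1, sr 0)}
  have left_mem : (sr 0, 1) ∈ C := Subgroup.subset_closure (by simp)
  have mid_mem : (sr 1, sr 1) ∈ C := Subgroup.subset_closure (by simp)
  have right_mem : (1, sr 0) ∈ C := Subgroup.subset_closure (by simp)
  have inl_mem {u : DihedralGroup N} (hu : parity hN u = 1) : (u, 1) ∈ C := by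
    have rot_mem : (r 2, 1) ∈ C := by
      simpa [pow_two, one_add_one_eq_two] using pow_mem (mul_mem left_mem mid_mem) 2
    refine (Subgroup.closure_le (C.comap (MonoidHom.inl _ _))).mpr ?_ (ker_parity_le hN hu)
    rintro _ (rfl | rfl)
    exacts [left_mem, rot_mem]
  have inr_mem {v : DihedralGroup M} (hv : parity hM v = 1) : (1, v) ∈ C := by
    have rot_mem : (1, r 2) ∈ C := by
      simpa [pow_two, one_add_one_eq_two] using pow_mem (mul_mem right_mem mid_mem) 2
    refine (Subgroup.closure_le (C.comap (MonoidHom.inr _ _))).mpr ?_ (ker_parity_le hM hv)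
    rintro _ (rfl | rfl)
    exacts [right_mem, rot_mem]
  have mk_mem {u v} (hu : parity hN u = 1) (hv : parity hM v = 1) : (u, v) ∈ C := by
    simpa using mul_mem (inl_mem hu) (inr_mem hv)
  apply le_antisymm
  · rintro ⟨u, v⟩ huv
    replace huv : parity hN u * parity hM v = 1 := huv
    obtain hu | hu := Int.units_eq_one_or (parity hN u)
    · exact mk_mem hu (by simpa [hu] using huv)
    · rw [← Subgroup.mul_mem_cancel_right C mid_mem]
      exact mk_mem (by simp [hu]) (by simpa [hu] using huv)
  · rw [Subgroup.closure_le]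
    rintro _ (rfl | rfl | rfl) <;> simp

end Dihedral

section StringTriples

variable {H : Type*} [Group H] {x y w : H}

/-- The relations shared by all the groups considered here: three involutions, the outer two
commuting, such that the fourth power of each rotation `x * y`, `y * w` commutes with the generator
that it does not involve. -/
structure IsStringTriple (x y w : H) : Prop where
  sq_left : x * x = 1
  sq_mid : y * y = 1
  sq_right : w * w = 1
  comm : Commute x w
  comm_left : Commute ((x * y) ^ 4) w
  comm_right : Commute x ((y * w) ^ 4)

/-- The square of `x * (y * w * y)`. For the reflections generating the symmetry group of the square
tessellation, `x` and `y * w * y` have parallel mirrors, so this is a translation. -/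
def translationSq (x y w : H) : H := (x * y * w * y) ^ 2

/-- The subgroup generated by the elements `translationSq` of a triple and of the reversed triple;
it turns out to be the kernel of the map to the product of two dihedral groups. -/
def translations (x y w : H) : Subgroup H :=
  Subgroup.closure {translationSq x y w, translationSq w y x}

theorem translationSq_mem_translations : translationSq x y w ∈ translations x y w :=
  Subgroup.subset_closure (by simp)

theorem translationSq_reverse_mem_translations : translationSq w y x ∈ translations x y w :=
  Subgroup.subset_closure (by simp)

theorem translations_eq_sup : translations x y w =
    Subgroup.zpowers (translationSq x y w) ⊔
      Subgroup.zpowers (translationSq x y w * (translationSq w y x)⁻¹) := by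
  apply le_antisymm
  · set Z := Subgroup.zpowers (translationSq x y w) ⊔
      Subgroup.zpowers (translationSq x y w * (translationSq w y x)⁻¹)
    have mem : translationSq x y w ∈ Z := Subgroup.mem_sup_left (Subgroup.mem_zpowers _)
    have mem' : translationSq w y x ∈ Z := by
      rw [← inv_mem_iff, ← Subgroup.mul_mem_cancel_left Z mem]
      exact Subgroup.mem_sup_right (Subgroup.mem_zpowers _)
    rw [translations, Subgroup.closure_le]
    rintro _ (rfl | rfl)
    exacts [mem, mem']
  · rw [sup_le_iff, Subgroup.zpowers_le, Subgroup.zpowers_le]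
    exact ⟨translationSq_mem_translations, mul_mem translationSq_mem_translations
      (inv_mem translationSq_reverse_mem_translations)⟩

namespace IsStringTriple

variable (h : IsStringTriple x y w)
include h

theorem inv_left : x⁻¹ = x := inv_eq_of_mul_eq_one_left h.sq_left

theorem inv_mid : y⁻¹ = y := inv_eq_of_mul_eq_one_left h.sq_mid

theorem inv_right : w⁻¹ = w := inv_eq_of_mul_eq_one_left h.sq_right

theorem left_cancel (a : H) : x * (x * a) = a := by rw [← mul_assoc, h.sq_left, one_mul]

theorem mid_cancel (a : H) : y * (y * a) = a := by rw [← mul_assoc, h.sq_mid, one_mul]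

theorem right_cancel (a : H) : w * (w * a) = a := by rw [← mul_assoc, h.sq_right, one_mul]

theorem sq_of_mem : ∀ a ∈ ({x, y, w} : Set H), a * a = 1 := by
  rintro _ (rfl | rfl | rfl)
  exacts [h.sq_left, h.sq_mid, h.sq_right]

theorem reverse : IsStringTriple w y x where
  sq_left := h.sq_right
  sq_mid := h.sq_mid
  sq_right := h.sq_left
  comm := h.comm.symm
  comm_left := by
    have e : (w * y) ^ 4 = ((y * w) ^ 4)⁻¹ := by
      rw [← inv_pow, mul_inv_rev, h.inv_mid, h.inv_right]
    exact e ▸ h.comm_right.symm.inv_left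
  comm_right := by
    have e : (y * x) ^ 4 = ((x * y) ^ 4)⁻¹ := by
      rw [← inv_pow, mul_inv_rev, h.inv_left, h.inv_mid]
    exact e ▸ h.comm_left.symm.inv_right

theorem mid_conj_translationSq : y * translationSq x y w * y = (translationSq w y x)⁻¹ := by
  simp only [translationSq, pow_two, mul_inv_rev, h.inv_left, h.inv_mid, h.inv_right, mul_assoc,
    h.sq_mid, mul_one]

theorem left_conj_translationSq : x * translationSq x y w * x = (translationSq x y w)⁻¹ := by
  simp only [translationSq, pow_two, mul_inv_rev, h.inv_left, h.inv_mid, h.inv_right, mul_assoc,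
    h.left_cancel]

theorem commute_right_translationSq : Commute w (translationSq x y w) := by
  have comm_left_word : x * (y * w * y * w * y * w * y) = y * w * y * w * y * w * y * x := by
    have e : y * w * y * w * y * w * y = (y * w) ^ 4 * w := by
      simp only [pow_succ, pow_zero, one_mul, mul_assoc, h.sq_right, mul_one]
    rw [e, (h.comm_right.mul_right h.comm).eq]
  have right_conj : w * (y * w * y) * x * (y * w * y) * w = y * w * y * x * (y * w * y) := by
    calc w * (y * w * y) * x * (y * w * y) * w
        = y * w * y * (y * w * y * w * y * w * y * x) * (y * w * y * w * y * w * y)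
            * (y * w * y) := by
          simp only [mul_assoc, h.mid_cancel, h.right_cancel, h.sq_mid, mul_one]
      _ = y * w * y * x * (y * w * y) := by
          rw [← comm_left_word]
          simp only [mul_assoc, h.mid_cancel, h.right_cancel]
  rw [← conj_eq_self_iff_commute h.sq_right]
  calc w * translationSq x y w * w = x * (w * (y * w * y) * x * (y * w * y) * w) := by
        simp only [translationSq, pow_two, ← mul_assoc, h.comm.eq]
    _ = translationSq x y w := by
        rw [right_conj]
        simp only [translationSq, pow_two, mul_assoc]

theorem commute_translationSq : Commute (translationSq x y w) (translationSq w y x) := by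
  have comm_mid_conj_right : Commute (y * w * y) (translationSq w y x) := by
    rw [← inv_inv (translationSq w y x), ← h.mid_conj_translationSq, Commute.inv_right_iff,
      ← conj_eq_self_iff_commute (by simp only [mul_assoc, h.mid_cancel, h.right_cancel, h.sq_mid])]
    calc y * w * y * (y * translationSq x y w * y) * (y * w * y)
        = y * (w * translationSq x y w * w) * y := by simp only [mul_assoc, h.mid_cancel]
      _ = _ := by rw [(conj_eq_self_iff_commute h.sq_right).mpr h.commute_right_translationSq]
  simpa only [translationSq, mul_assoc] using
    (h.reverse.commute_right_translationSq.mul_left comm_mid_conj_right).pow_left 2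

theorem commutator_eq_translationSq_mul_inv :
    ((x * y) ^ 2)⁻¹ * ((y * w) ^ 2)⁻¹ * (x * y) ^ 2 * (y * w) ^ 2 =
      translationSq x y w * (translationSq w y x)⁻¹ := by
  have mid_left_mid_conj : y * x * y * translationSq x y w * (y * x * y) = translationSq x y w := by
    have e : x * (y * translationSq x y w * y) * x = y * translationSq x y w * y := by
      rw [h.mid_conj_translationSq, conj_eq_self_iff_commute h.sq_left]
      exact h.reverse.commute_right_translationSq.inv_right
    calc y * x * y * translationSq x y w * (y * x * y)
        = y * (x * (y * translationSq x y w * y) * x) * y := by simp only [mul_assoc]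
      _ = translationSq x y w := by
        rw [e]
        simp only [mul_assoc, h.mid_cancel, h.sq_mid, mul_one]
  have right_left (a : H) : w * (x * a) = x * (w * a) := by
    rw [← mul_assoc, ← h.comm.eq, mul_assoc]
  calc ((x * y) ^ 2)⁻¹ * ((y * w) ^ 2)⁻¹ * (x * y) ^ 2 * (y * w) ^ 2
      = y * x * y * (w * translationSq x y w * w) * (w * y * x * y * w) := by
        simp only [translationSq, pow_two, mul_inv_rev, h.inv_left, h.inv_mid, h.inv_right,
          mul_assoc, h.right_cancel, h.mid_cancel, right_left]
    _ = (y * x * y * translationSq x y w * (y * x * y)) * (y * x * y * w * y * x * y * w) := by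
        rw [(conj_eq_self_iff_commute h.sq_right).mpr h.commute_right_translationSq]
        simp only [mul_assoc, h.mid_cancel, h.left_cancel]
    _ = translationSq x y w * (y * translationSq x y w * y) := by
        rw [mid_left_mid_conj]
        simp only [translationSq, pow_two, mul_assoc, h.mid_cancel, h.sq_mid, mul_one]
    _ = translationSq x y w * (translationSq w y x)⁻¹ := by rw [h.mid_conj_translationSq]

theorem isMulCommutative_translations : IsMulCommutative (translations x y w) := by
  refine Subgroup.isMulCommutative_closure ?_
  rintro _ (rfl | rfl) _ (rfl | rfl)
  exacts [rfl, h.commute_translationSq, h.commute_translationSq.symm, rfl]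

theorem conj_mem_translations : ∀ a ∈ ({x, y, w} : Set H),
    ∀ s ∈ ({translationSq x y w, translationSq w y x} : Set H), a * s * a ∈ translations x y w := by
  have mem := translationSq_mem_translations (x := x) (y := y) (w := w)
  have mem' := translationSq_reverse_mem_translations (x := x) (y := y) (w := w)
  rintro _ (rfl | rfl | rfl) _ (rfl | rfl)
  · rw [h.left_conj_translationSq]; exact inv_mem mem
  · rwa [(conj_eq_self_iff_commute h.sq_left).mpr h.reverse.commute_right_translationSq]
  · rw [h.mid_conj_translationSq]; exact inv_mem mem'
  · rw [h.reverse.mid_conj_translationSq]; exact inv_mem mem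
  · rwa [(conj_eq_self_iff_commute h.sq_right).mpr h.commute_right_translationSq]
  · rw [h.reverse.left_conj_translationSq]; exact inv_mem mem'

theorem normal_translations (hgen : Subgroup.closure {x, y, w} = ⊤) :
    (translations x y w).Normal :=
  normal_closure_of_involutions hgen h.sq_of_mem h.conj_mem_translations

theorem normal_closure_mid_conj_right_union (hgen : Subgroup.closure {x, y, w} = ⊤) :
    (Subgroup.closure
      ({w, y * w * y} ∪ {translationSq x y w, translationSq w y x})).Normal := by
  refine normal_closure_of_involutions hgen h.sq_of_mem fun a ha s hs => ?_
  set E := Subgroup.closure ({w, y * w * y} ∪ {translationSq x y w, translationSq w y x})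
  have le : translations x y w ≤ E := Subgroup.closure_mono Set.subset_union_right
  have right_mem : w ∈ E := Subgroup.subset_closure (by simp)
  have mid_conj_mem : y * w * y ∈ E := Subgroup.subset_closure (by simp)
  obtain (rfl | rfl) | hs := hs
  · obtain rfl | rfl | rfl := ha
    · rwa [(conj_eq_self_iff_commute h.sq_left).mpr h.comm]
    · exact mid_conj_mem
    · exact mul_mem (mul_mem right_mem right_mem) right_mem
  · obtain rfl | rfl | rfl := ha
    · have e : a * (y * w * y) * a = translationSq a y w * (y * w * y) := by
        simp only [translationSq, pow_two, mul_assoc, h.mid_cancel, h.right_cancel, h.sq_mid,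
          mul_one]
      exact e ▸ mul_mem (le translationSq_mem_translations) mid_conj_mem
    · simpa only [mul_assoc, h.mid_cancel, h.sq_mid, mul_one] using right_mem
    · exact mul_mem (mul_mem right_mem mid_conj_mem) right_mem
  · exact le (h.conj_mem_translations a ha s hs)

open DihedralGroup in
theorem ker_eq_translations {p q : ℕ} (hgen : Subgroup.closure {x, y, w} = ⊤)
    (hp : (x * y) ^ p = 1) (hq : (w * y) ^ q = 1)
    {f : H →* DihedralGroup p × DihedralGroup q}
    (hx : f x = (sr 0, 1)) (hy : f y = (sr 1, sr 1)) (hw : f w = (1, sr 0)) :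
    f.ker = translations x y w := by
  have hN := h.normal_translations hgen
  have hE := h.normal_closure_mid_conj_right_union hgen
  have hz : f (translationSq x y w) = 1 := by simp [translationSq, hx, hy, hw, pow_two]
  have hz' : f (translationSq w y x) = 1 := by simp [translationSq, hx, hy, hw, pow_two]
  set E := Subgroup.closure ({w, y * w * y} ∪ {translationSq x y w, translationSq w y x})
  have right_mem : w ∈ E := Subgroup.subset_closure (by simp)
  have ker_left_le : ((MonoidHom.fst _ _).comp f).ker ≤ E := by
    have := closure_inf_ker_le ((MonoidHom.fst _ _).comp f)
      (dihedralLift h.sq_left h.sq_mid hp) (S := {x, y, w}) (N := E) <| by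
        rintro _ (rfl | rfl | rfl) <;> simp [hx, hy, hw, right_mem]
    rwa [hgen, top_inf_eq] at this
  have inf_ker_right_le : E ⊓ ((MonoidHom.snd _ _).comp f).ker ≤ translations x y w := by
    refine closure_inf_ker_le _ (dihedralLift h.sq_right h.sq_mid hq) ?_
    rintro _ ((rfl | rfl) | rfl | rfl)
    · simp [hw]
    · have e : (dihedralLift h.sq_right h.sq_mid hq)
          ((MonoidHom.snd _ _).comp f (y * w * y)) = y * w * y := by
        simp only [map_mul, MonoidHom.comp_apply, MonoidHom.coe_snd, hy, hw, dihedralLift_sr_zero,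
          dihedralLift_sr_one]
      rw [e, inv_mul_cancel]
      exact one_mem _
    · simp [hz, translationSq_mem_translations]
    · simp [hz', translationSq_reverse_mem_translations]
  apply le_antisymm
  · intro a ha
    rw [MonoidHom.mem_ker] at ha
    exact inf_ker_right_le ⟨ker_left_le (by simp [MonoidHom.mem_ker, ha]), by simp [ha]⟩
  · rw [translations, Subgroup.closure_le]
    rintro _ (rfl | rfl)
    exacts [hz, hz']

theorem translationSq_pow_two_mul_eq_one {m : ℕ}
    (hm : (translationSq x y w * (translationSq w y x)⁻¹) ^ m = 1) :
    translationSq x y w ^ (2 * m) = 1 := by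
  have pow_eq : translationSq x y w ^ m = translationSq w y x ^ m := by
    rwa [h.commute_translationSq.inv_right.mul_pow, inv_pow, mul_inv_eq_one] at hm
  have pow_eq_inv : translationSq x y w ^ m = (translationSq x y w ^ m)⁻¹ := by
    calc translationSq x y w ^ m = x * translationSq x y w ^ m * x := by
          rw [pow_eq, (conj_eq_self_iff_commute h.sq_left).mpr
            (h.reverse.commute_right_translationSq.pow_right m)]
      _ = (x * translationSq x y w * x⁻¹) ^ m := by rw [conj_pow, h.inv_left]
      _ = (translationSq x y w ^ m)⁻¹ := by
          rw [h.inv_left, h.left_conj_translationSq, inv_pow]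
  rw [two_mul, pow_add, mul_eq_one_iff_eq_inv]
  exact pow_eq_inv

end IsStringTriple

end StringTriples

section SquareTessellation

/-- The reflection of the plane `R × R` in the line `u + v = 1`. With `mirrorMid R` and
`mirrorRight R` it generates the symmetry group of a square tessellation. -/
def mirrorLeft (R : Type*) [CommRing R] : Equiv.Perm (R × R) :=
  ((Equiv.subLeft 1).prodCongr (Equiv.subLeft 1)).trans (Equiv.prodComm R R)

/-- The reflection of the plane `R × R` in the line `v = 0`. -/
def mirrorMid (R : Type*) [CommRing R] : Equiv.Perm (R × R) :=
  (Equiv.refl R).prodCongr (Equiv.neg R)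

/-- The reflection of the plane `R × R` in the line `u = v`. -/
def mirrorRight (R : Type*) [CommRing R] : Equiv.Perm (R × R) :=
  Equiv.prodComm R R

section

variable {R : Type*} [CommRing R]

@[simp]
theorem mirrorLeft_apply (c : R × R) : mirrorLeft R c = (1 - c.2, 1 - c.1) := rfl

@[simp]
theorem mirrorMid_apply (c : R × R) : mirrorMid R c = (c.1, -c.2) := rfl

@[simp]
theorem mirrorRight_apply (c : R × R) : mirrorRight R c = (c.2, c.1) := rfl

theorem mirrorLeft_mul_mirrorMid_pow_four : (mirrorLeft R * mirrorMid R) ^ 4 = 1 := by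
  ext c <;> simp [pow_succ]

theorem mirrorMid_mul_mirrorRight_pow_four : (mirrorMid R * mirrorRight R) ^ 4 = 1 := by
  ext c <;> simp [pow_succ]

theorem isStringTriple_mirrors : IsStringTriple (mirrorLeft R) (mirrorMid R) (mirrorRight R) where
  sq_left := by ext c <;> simp
  sq_mid := by ext c <;> simp
  sq_right := by ext c <;> simp
  comm := by ext c <;> simp
  comm_left := by rw [mirrorLeft_mul_mirrorMid_pow_four]; exact Commute.one_left _
  comm_right := by rw [mirrorMid_mul_mirrorRight_pow_four]; exact Commute.one_right _

theorem translationSq_mirrors :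
    translationSq (mirrorLeft R) (mirrorMid R) (mirrorRight R) = Equiv.addRight (2, 2) := by
  ext c <;> simp [translationSq, pow_two] <;> ring

theorem translationSq_mirrors_mul_inv :
    translationSq (mirrorLeft R) (mirrorMid R) (mirrorRight R) *
      (translationSq (mirrorRight R) (mirrorMid R) (mirrorLeft R))⁻¹ = Equiv.addRight (4, 0) := by
  rw [mul_inv_eq_iff_eq_mul]
  ext c
  · simp [translationSq, pow_two]
    ring
  · simp [translationSq, pow_two]

end

theorem orderOf_addRight {A : Type*} [AddGroup A] (c : A) :
    orderOf (Equiv.addRight c) = addOrderOf c := by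
  rw [← orderOf_ofAdd_eq_addOrderOf, orderOf_eq_orderOf_iff]
  intro k
  rw [Equiv.nsmul_addRight, ← ofAdd_nsmul, ofAdd_eq_one, Equiv.ext_iff]
  simp

theorem orderOf_addRight_two_two (m : ℕ) :
    orderOf (Equiv.addRight ((2, 2) : ZMod (4 * m) × ZMod (4 * m))) = 2 * m := by
  rw [orderOf_addRight, Prod.addOrderOf, Nat.lcm_self,
    show ((2, 2) : ZMod (4 * m) × ZMod (4 * m)).1 = (2 : ℕ) by simp,
    ZMod.addOrderOf_coe' _ two_ne_zero,
    Nat.gcd_eq_right ⟨2 * m, by ring⟩]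
  omega

theorem orderOf_addRight_four_zero (m : ℕ) :
    orderOf (Equiv.addRight ((4, 0) : ZMod (4 * m) × ZMod (4 * m))) = m := by
  rw [orderOf_addRight, Prod.addOrderOf, addOrderOf_zero, Nat.lcm_one_right,
    show ((4, 0) : ZMod (4 * m) × ZMod (4 * m)).1 = (4 : ℕ) by simp,
    ZMod.addOrderOf_coe' _ four_ne_zero, Nat.gcd_mul_right_left]
  omega

theorem disjoint_zpowers_addRight {A B : Type*} [AddGroup A] [AddGroup B] {a a' : A} {b : B}
    (h : addOrderOf a ∣ addOrderOf b) :
    Disjoint (Subgroup.zpowers (Equiv.addRight (a, b)))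
      (Subgroup.zpowers (Equiv.addRight (a', (0 : B)))) := by
  rw [Subgroup.disjoint_def]
  rintro _ ⟨i, rfl⟩ ⟨j, hj⟩
  have smul_b : i • b = 0 := by
    simpa using (congrArg Prod.snd (Equiv.congr_fun hj 0)).symm
  have smul_a : i • a = 0 :=
    addOrderOf_dvd_iff_zsmul_eq_zero.mp
      ((Int.natCast_dvd_natCast.mpr h).trans (addOrderOf_dvd_iff_zsmul_eq_zero.mpr smul_b))
  ext c <;> simp [smul_a, smul_b]

end SquareTessellation

section Presentation

/-- The relators of the theorem for arbitrary exponents `p`, `q`, `m`. -/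
def stringRels (p q m : ℕ) : Set (FreeGroup (Fin 3)) :=
  {r0 ^ 2, r1 ^ 2, r2 ^ 2, (r0 * r1) ^ p, (r1 * r2) ^ q, (r0 * r2) ^ 2,
   pc ((r0 * r1) ^ 4) r2, pc r0 ((r1 * r2) ^ 4), pc ((r0 * r1) ^ 2) ((r1 * r2) ^ 2) ^ m}

/-- The group of the theorem for arbitrary exponents `p`, `q`, `m`. -/
abbrev StringGroup (p q m : ℕ) : Type := PresentedGroup (stringRels p q m)

/-- The generators of `StringGroup p q m`. -/
def gen (p q m : ℕ) : Fin 3 → StringGroup p q m := PresentedGroup.of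

/-- The triple `ρ` satisfies the relations `stringRels p q m`, the last one being expressed through
`translationSq`. -/
structure IsRealization {H : Type*} [Group H] (p q m : ℕ) (ρ : Fin 3 → H) : Prop extends
    IsStringTriple (ρ 0) (ρ 1) (ρ 2) where
  pow_left : (ρ 0 * ρ 1) ^ p = 1
  pow_right : (ρ 1 * ρ 2) ^ q = 1
  pow_translationSq :
    (translationSq (ρ 0) (ρ 1) (ρ 2) * (translationSq (ρ 2) (ρ 1) (ρ 0))⁻¹) ^ m = 1

variable {H : Type*} [Group H] {p q m : ℕ} {ρ : Fin 3 → H}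

theorem isRealization_iff_forall_lift_eq_one :
    IsRealization p q m ρ ↔ ∀ a ∈ stringRels p q m, FreeGroup.lift ρ a = 1 := by
  simp only [stringRels, r0, r1, r2, pc, Set.mem_insert_iff, Set.mem_singleton_iff,
    forall_eq_or_imp, forall_eq, map_mul, map_pow, map_inv, FreeGroup.lift_apply_of, pow_two (ρ _),
    inv_mul_inv_mul_mul_eq_one_iff_commute]
  constructor
  · intro h
    exact ⟨h.sq_left, h.sq_mid, h.sq_right, h.pow_left, h.pow_right,
      (mul_sq_eq_one_iff_commute h.sq_left h.sq_right).mpr h.comm, h.comm_left, h.comm_right,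
      h.commutator_eq_translationSq_mul_inv ▸ h.pow_translationSq⟩
  · rintro ⟨sq_left, sq_mid, sq_right, pow_left, pow_right, sq_mul, comm_left, comm_right, pow_comm⟩
    have triple : IsStringTriple (ρ 0) (ρ 1) (ρ 2) :=
      ⟨sq_left, sq_mid, sq_right, (mul_sq_eq_one_iff_commute sq_left sq_right).mp sq_mul, comm_left,
        comm_right⟩
    exact ⟨triple, pow_left, pow_right, triple.commutator_eq_translationSq_mul_inv ▸ pow_comm⟩

theorem isRealization_gen (p q m : ℕ) : IsRealization p q m (gen p q m) := by
  refine isRealization_iff_forall_lift_eq_one.mpr fun a ha => ?_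
  rw [← PresentedGroup.one_of_mem ha]
  exact (FreeGroup.lift_unique (PresentedGroup.mk _) fun _ => rfl).symm

theorem closure_gen (p q m : ℕ) :
    Subgroup.closure {gen p q m 0, gen p q m 1, gen p q m 2} = ⊤ := by
  rw [← PresentedGroup.closure_range_of (stringRels p q m)]
  congr 1
  ext a
  simp [gen, Fin.exists_fin_succ, eq_comm]

namespace IsRealization

/-- The homomorphism from `StringGroup p q m` sending its generators to the triple `ρ`. -/
def lift (h : IsRealization p q m ρ) : StringGroup p q m →* H :=
  PresentedGroup.toGroup (isRealization_iff_forall_lift_eq_one.mp h)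

@[simp]
theorem lift_gen (h : IsRealization p q m ρ) (i : Fin 3) : h.lift (gen p q m i) = ρ i :=
  PresentedGroup.toGroup.of _

theorem of_eq_one {i : Fin 3} (hi : ρ i = 1) (hsq : ∀ j, ρ j * ρ j = 1)
    (hcomm : Commute (ρ 0) (ρ 2)) (hp : (ρ 0 * ρ 1) ^ p = 1) (hq : (ρ 1 * ρ 2) ^ q = 1) :
    IsRealization p q m ρ := by
  have pow_four (j : Fin 3) : ρ j ^ 4 = 1 := pow_eq_one_of_mul_self_eq_one (hsq j) (by norm_num)
  have triple : IsStringTriple (ρ 0) (ρ 1) (ρ 2) := by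
    refine ⟨hsq 0, hsq 1, hsq 2, hcomm, ?_, ?_⟩ <;> fin_cases i <;> simp_all
  have sq_eq_one : (ρ 0 * ρ 1) ^ 2 = 1 ∨ (ρ 1 * ρ 2) ^ 2 = 1 := by
    fin_cases i <;> simp_all [pow_two]
  refine ⟨triple, hp, hq, ?_⟩
  rw [← triple.commutator_eq_translationSq_mul_inv]
  obtain h | h := sq_eq_one <;> simp [h]

theorem mulIndicator (h : IsRealization p q m ρ) (hp : 2 ∣ p) (hq : 2 ∣ q) (I : Set (Fin 3)) :
    IsRealization p q m (I.mulIndicator ρ) := by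
  classical
  have sq (i : Fin 3) : ρ i * ρ i = 1 := by fin_cases i; exacts [h.sq_left, h.sq_mid, h.sq_right]
  have sq' (i : Fin 3) : I.mulIndicator ρ i * I.mulIndicator ρ i = 1 := by
    by_cases hi : i ∈ I <;> simp [hi, sq]
  have pow {i j : Fin 3} {k : ℕ} (hk : 2 ∣ k) (hij : (ρ i * ρ j) ^ k = 1) :
      (I.mulIndicator ρ i * I.mulIndicator ρ j) ^ k = 1 := by
    by_cases hi : i ∈ I <;> by_cases hj : j ∈ I <;>
      simp [hi, hj, hij, pow_eq_one_of_mul_self_eq_one (sq _) hk]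
  obtain rfl | hI := eq_or_ne I Set.univ
  · simpa using h
  obtain ⟨i, hi⟩ := (Set.ne_univ_iff_exists_notMem I).mp hI
  refine of_eq_one (Set.mulIndicator_of_notMem hi ρ) sq' ?_ (pow hp h.pow_left) (pow hq h.pow_right)
  exact (mul_sq_eq_one_iff_commute (sq' 0) (sq' 2)).mp
    (pow dvd_rfl ((mul_sq_eq_one_iff_commute (sq 0) (sq 2)).mpr h.comm))

end IsRealization

theorem interProp_of_retractions
    (h : ∀ I : Set (Fin 3), ∃ φ : H →* H, ∀ i, φ (ρ i) = I.mulIndicator ρ i) : InterProp ρ := by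
  intro I J
  obtain ⟨φ, hφ⟩ := h I
  refine le_antisymm ?_ (le_inf (Subgroup.closure_mono (Set.image_mono Set.inter_subset_left))
    (Subgroup.closure_mono (Set.image_mono Set.inter_subset_right)))
  have fixes : Set.EqOn φ (MonoidHom.id H) (Subgroup.closure (ρ '' I)) := by
    refine MonoidHom.eqOn_closure ?_
    rintro _ ⟨i, hi, rfl⟩
    simp [hφ, hi]
  have maps : Subgroup.closure (ρ '' J) ≤ (Subgroup.closure (ρ '' (I ∩ J))).comap φ := by
    rw [Subgroup.closure_le]
    rintro _ ⟨j, hj, rfl⟩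
    by_cases hi : j ∈ I
    · simpa [hφ, hi] using Subgroup.subset_closure (Set.mem_image_of_mem ρ (Set.mem_inter hi hj))
    · simp [hφ, hi]
  rintro a ⟨haI, haJ⟩
  rw [← MonoidHom.id_apply H a, ← fixes haI]
  exact maps haJ

end Presentation

section StringGroups

open DihedralGroup

variable {p q m : ℕ}

theorem isRealization_dihedral_left (p m : ℕ) (hq : 2 ∣ q) :
    IsRealization p q m ![(sr 0 : DihedralGroup p), sr 1, 1] :=
  .of_eq_one (i := 2) rfl (by simp [Fin.forall_fin_succ]) (by simp) (by simp)
    (by simpa using pow_eq_one_of_mul_self_eq_one (sr_mul_self 1) hq)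

theorem isRealization_dihedral_right (q m : ℕ) (hp : 2 ∣ p) :
    IsRealization p q m ![(1 : DihedralGroup q), sr 1, sr 0] :=
  .of_eq_one (i := 0) rfl (by simp [Fin.forall_fin_succ]) (by simp)
    (by simpa using pow_eq_one_of_mul_self_eq_one (sr_mul_self 1) hp) (by simp)

theorem isRealization_mirrors (m : ℕ) (hp : 4 ∣ p) (hq : 4 ∣ q) :
    IsRealization p q m
      ![mirrorLeft (ZMod (4 * m)), mirrorMid (ZMod (4 * m)), mirrorRight (ZMod (4 * m))] where
  toIsStringTriple := isStringTriple_mirrors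
  pow_left := orderOf_dvd_iff_pow_eq_one.mp <|
    (orderOf_dvd_of_pow_eq_one mirrorLeft_mul_mirrorMid_pow_four).trans hp
  pow_right := orderOf_dvd_iff_pow_eq_one.mp <|
    (orderOf_dvd_of_pow_eq_one mirrorMid_mul_mirrorRight_pow_four).trans hq
  pow_translationSq := by
    rw [← orderOf_dvd_iff_pow_eq_one]
    exact ((congrArg orderOf translationSq_mirrors_mul_inv).trans
      (orderOf_addRight_four_zero m)).dvd

/-- The product of the homomorphisms to dihedral groups killing the last and the first generator of
`StringGroup p q m`. -/
def dihedralProd (m : ℕ) (hp : 2 ∣ p) (hq : 2 ∣ q) :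
    StringGroup p q m →* DihedralGroup p × DihedralGroup q :=
  (isRealization_dihedral_left p m hq).lift.prod (isRealization_dihedral_right q m hp).lift

section

variable (m : ℕ) (hp : 2 ∣ p) (hq : 2 ∣ q)

theorem dihedralProd_gen_zero : dihedralProd m hp hq (gen p q m 0) = (sr 0, 1) := by
  simp [dihedralProd]

theorem dihedralProd_gen_one : dihedralProd m hp hq (gen p q m 1) = (sr 1, sr 1) := by
  simp [dihedralProd]

theorem dihedralProd_gen_two : dihedralProd m hp hq (gen p q m 2) = (1, sr 0) := by
  simp [dihedralProd]

theorem range_dihedralProd :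
    (dihedralProd m hp hq).range = ((parity hp).coprod (parity hq)).ker := by
  rw [ker_parity_coprod_eq_closure, MonoidHom.range_eq_map, ← closure_gen,
    MonoidHom.map_closure]
  simp only [Set.image_insert_eq, Set.image_singleton, dihedralProd_gen_zero,
    dihedralProd_gen_one, dihedralProd_gen_two]

theorem ker_dihedralProd :
    (dihedralProd m hp hq).ker = translations (gen p q m 0) (gen p q m 1) (gen p q m 2) := by
  have h := isRealization_gen p q m
  have pow_right : (gen p q m 2 * gen p q m 1) ^ q = 1 := by
    rw [← inv_eq_one, ← inv_pow, mul_inv_rev, h.inv_mid, h.inv_right, h.pow_right]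
  exact h.ker_eq_translations (closure_gen p q m) h.pow_left pow_right
    (dihedralProd_gen_zero m hp hq) (dihedralProd_gen_one m hp hq) (dihedralProd_gen_two m hp hq)

end

theorem card_translations_gen (m : ℕ) (hp : 4 ∣ p) (hq : 4 ∣ q) :
    Nat.card (translations (gen p q m 0) (gen p q m 1) (gen p q m 2)) = 2 * m * m := by
  have h := isRealization_gen p q m
  set z := translationSq (gen p q m 0) (gen p q m 1) (gen p q m 2) with z_def
  set z' := translationSq (gen p q m 2) (gen p q m 1) (gen p q m 0) with z'_def
  let f := (isRealization_mirrors m hp hq).lift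
  have map_z : f z = Equiv.addRight (2, 2) := by
    rw [← translationSq_mirrors]
    simp [f, z_def, translationSq]
  have map_zz' : f (z * z'⁻¹) = Equiv.addRight (4, 0) := by
    rw [← translationSq_mirrors_mul_inv]
    simp [f, z_def, z'_def, translationSq]
  have orderOf_map_z : orderOf (f z) = 2 * m := by rw [map_z, orderOf_addRight_two_two]
  have orderOf_z : orderOf z = 2 * m :=
    orderOf_eq_of_orderOf_map f (h.translationSq_pow_two_mul_eq_one h.pow_translationSq)
      orderOf_map_z
  have orderOf_zz' : orderOf (z * z'⁻¹) = m :=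
    orderOf_eq_of_orderOf_map f h.pow_translationSq (by rw [map_zz', orderOf_addRight_four_zero])
  have disj : Disjoint (Subgroup.zpowers z) (Subgroup.zpowers (z * z'⁻¹)) := by
    refine disjoint_zpowers_of_map f (by rw [orderOf_z, orderOf_map_z]) ?_
    rw [map_z, map_zz']
    exact disjoint_zpowers_addRight dvd_rfl
  rw [translations_eq_sup, card_zpowers_sup_zpowers _ disj, orderOf_z, orderOf_zz']
  exact (Commute.refl z).mul_right h.commute_translationSq.inv_right

theorem card_stringGroup (m : ℕ) (hp : 4 ∣ p) (hq : 4 ∣ q) :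
    Nat.card (StringGroup p q m) = 4 * p * q * m ^ 2 := by
  have hp2 : 2 ∣ p := (by norm_num : 2 ∣ 4).trans hp
  have hq2 : 2 ∣ q := (by norm_num : 2 ∣ 4).trans hq
  rw [← (dihedralProd m hp2 hq2).ker.card_mul_index, Subgroup.index_ker, range_dihedralProd,
    card_ker_parity_coprod, ker_dihedralProd, card_translations_gen m hp hq]
  ring

theorem isSolvable_stringGroup (m : ℕ) (hp : 2 ∣ p) (hq : 2 ∣ q) :
    Group.IsSolvable (StringGroup p q m) := by
  have comm := (isRealization_gen p q m).isMulCommutative_translations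
  have := Group.isSolvable_of_comm comm.is_comm.comm
  have := isSolvable_dihedralGroup p
  have := isSolvable_dihedralGroup q
  refine Group.isSolvable_of_ker_le_range
    (translations (gen p q m 0) (gen p q m 1) (gen p q m 2)).subtype (dihedralProd m hp hq) ?_
  rw [ker_dihedralProd, Subgroup.range_subtype]

theorem orderOf_gen (m : ℕ) (hp : 2 ∣ p) (hq : 2 ∣ q) (i : Fin 3) : orderOf (gen p q m i) = 2 := by
  have h := isRealization_gen p q m
  fin_cases i
  · exact orderOf_eq_of_orderOf_map (isRealization_dihedral_left p m hq).lift
      (by simpa [pow_two] using h.sq_left) (by simp)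
  · exact orderOf_eq_of_orderOf_map (isRealization_dihedral_left p m hq).lift
      (by simpa [pow_two] using h.sq_mid) (by simp)
  · exact orderOf_eq_of_orderOf_map (isRealization_dihedral_right q m hp).lift
      (by simpa [pow_two] using h.sq_right) (by simp)

theorem orderOf_gen_zero_mul_gen_two (p m : ℕ) (hq : 2 ∣ q) :
    orderOf (gen p q m 0 * gen p q m 2) = 2 := by
  have h := isRealization_gen p q m
  exact orderOf_eq_of_orderOf_map (isRealization_dihedral_left p m hq).lift
    ((mul_sq_eq_one_iff_commute h.sq_left h.sq_right).mpr h.comm) (by simp)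

theorem orderOf_gen_zero_mul_gen_one (p m : ℕ) (hq : 2 ∣ q) :
    orderOf (gen p q m 0 * gen p q m 1) = p :=
  orderOf_eq_of_orderOf_map (isRealization_dihedral_left p m hq).lift
    (isRealization_gen p q m).pow_left (by simp)

theorem orderOf_gen_one_mul_gen_two (q m : ℕ) (hp : 2 ∣ p) :
    orderOf (gen p q m 1 * gen p q m 2) = q :=
  orderOf_eq_of_orderOf_map (isRealization_dihedral_right q m hp).lift
    (isRealization_gen p q m).pow_right (by
      rw [map_mul, IsRealization.lift_gen, IsRealization.lift_gen, ← orderOf_inv]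
      simp)

theorem interProp_gen (m : ℕ) (hp : 2 ∣ p) (hq : 2 ∣ q) : InterProp (gen p q m) :=
  interProp_of_retractions fun I =>
    ⟨((isRealization_gen p q m).mulIndicator hp hq I).lift, fun _ => by simp⟩

-- When an exponent is zero, the zero values of `Nat.card` and `orderOf` mean infinite.
theorem stmt_10_general (p q m : ℕ) (hp : 4 ∣ p) (hq : 4 ∣ q) :
    Nat.card (StringGroup p q m) = 4 * p * q * m ^ 2 ∧
    Group.IsSolvable (StringGroup p q m) ∧
    orderOf (gen p q m 0) = 2 ∧ orderOf (gen p q m 1) = 2 ∧ orderOf (gen p q m 2) = 2 ∧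
    orderOf (gen p q m 0 * gen p q m 2) = 2 ∧
    orderOf (gen p q m 0 * gen p q m 1) = p ∧
    orderOf (gen p q m 1 * gen p q m 2) = q ∧
    InterProp ![gen p q m 0, gen p q m 1, gen p q m 2] := by
  have hp2 : 2 ∣ p := (by norm_num : 2 ∣ 4).trans hp
  have hq2 : 2 ∣ q := (by norm_num : 2 ∣ 4).trans hq
  have gen_eq : ![gen p q m 0, gen p q m 1, gen p q m 2] = gen p q m := FinVec.etaExpand_eq _
  exact ⟨card_stringGroup m hp hq, isSolvable_stringGroup m hp2 hq2, orderOf_gen m hp2 hq2 0,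
    orderOf_gen m hp2 hq2 1, orderOf_gen m hp2 hq2 2, orderOf_gen_zero_mul_gen_two p m hq2,
    orderOf_gen_zero_mul_gen_one p m hq2, orderOf_gen_one_mul_gen_two q m hp2,
    gen_eq ▸ interProp_gen m hp2 hq2⟩

end StringGroups

theorem four_mul_mul_mul_sq_eq_two_pow_mul {s t n : ℕ} (hn : s + t + 1 ≤ n)
    (hnst : Even (n - s - t)) (l1 l2 : ℕ) :
    4 * (2 ^ s * l1) * (2 ^ t * l2) * (2 ^ ((n - s - t - 2) / 2)) ^ 2 = 2 ^ n * l1 * l2 := by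
  obtain ⟨k, hk⟩ := hnst
  obtain ⟨k, rfl⟩ := Nat.exists_eq_succ_of_ne_zero (by omega : k ≠ 0)
  obtain rfl : n = s + t + 2 * k + 2 := by omega
  rw [show (s + t + 2 * k + 2 - s - t - 2) / 2 = k by omega]
  ring

/-- Theorem 4.1, case `n - s - t` even: the group `G` is a solvable string C-group of
order `2^n ℓ1 ℓ2` and Schläfli type `{2^s ℓ1, 2^t ℓ2}`. -/
theorem stmt_10 (s t n l1 l2 : ℕ) (hs : 2 ≤ s) (ht : 2 ≤ t) (hn : s + t + 1 ≤ n)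
    (hnst : Even (n - s - t)) (hl1 : Odd l1) (hl2 : Odd l2)
    (hl1' : 0 < l1) (hl2' : 0 < l2) :
    Nat.card (PresentedGroup (rels s t n l1 l2)) = 2 ^ n * l1 * l2 ∧
    IsSolvable (PresentedGroup (rels s t n l1 l2)) ∧
    orderOf (g s t n l1 l2 0) = 2 ∧ orderOf (g s t n l1 l2 1) = 2 ∧
    orderOf (g s t n l1 l2 2) = 2 ∧
    orderOf (g s t n l1 l2 0 * g s t n l1 l2 2) = 2 ∧
    orderOf (g s t n l1 l2 0 * g s t n l1 l2 1) = 2 ^ s * l1 ∧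
    orderOf (g s t n l1 l2 1 * g s t n l1 l2 2) = 2 ^ t * l2 ∧
    InterProp ![g s t n l1 l2 0, g s t n l1 l2 1, g s t n l1 l2 2] := by
  rw [← four_mul_mul_mul_sq_eq_two_pow_mul hn hnst]
  exact stmt_10_general (2 ^ s * l1) (2 ^ t * l2) _ ((pow_dvd_pow 2 hs).mul_right l1)
    ((pow_dvd_pow 2 ht).mul_right l2)

end Stmt10
end

section
/- For every odd prime p and all integers n, s, t with s ≥ 2, t ≥ 2 and n ≥ s + t + 1, there exists a finite group G of order 2^n · p together with elements ρ0, ρ1, ρ2 that generate G, such that ρ0, ρ1, ρ2 and ρ0ρ2 have order exactly 2, ρ0ρ1 has order exactly 2^s · p, ρ1ρ2 has order exactly 2^t, and the triple (ρ0, ρ1, ρ2) satisfies the intersection property in G. -/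
/-- The intersection property for a triple of elements. -/
def InterProp {G : Type*} [Group G] (ρ : Fin 3 → G) : Prop :=
  ∀ I J : Set (Fin 3),
    Subgroup.closure (ρ '' I) ⊓ Subgroup.closure (ρ '' J) =
      Subgroup.closure (ρ '' (I ∩ J))

/-- `(G, (ρ0, ρ1, ρ2))` is a string C-group of order `2^n p` with Schläfli type
`{2^s p, 2^t}`. -/
def IsType1StringC (p n s t : ℕ) (G : Type) [Group G] (ρ0 ρ1 ρ2 : G) : Prop :=
  Nat.card G = 2 ^ n * p ∧
  Subgroup.closure {ρ0, ρ1, ρ2} = ⊤ ∧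
  orderOf ρ0 = 2 ∧ orderOf ρ1 = 2 ∧ orderOf ρ2 = 2 ∧
  orderOf (ρ0 * ρ2) = 2 ∧
  orderOf (ρ0 * ρ1) = 2 ^ s * p ∧ orderOf (ρ1 * ρ2) = 2 ^ t ∧
  InterProp ![ρ0, ρ1, ρ2]

/-!
Take the dihedral groups of orders `2M` and `2N`, with `M = 2 ^ s * p` and `N = 2 ^ t`, and a finite
`2`-group generated by three involutions satisfying the relations of the Coxeter group `[4, 4]`.
In their product, the triple `(ρ0, ρ1, ρ2)` that projects to reflections in each dihedral factor
(with `ρ2`, respectively `ρ0`, projecting to `1`) still satisfies the relations of `[M, N]`, because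
`4` divides `M` and `N`. The projection `α` to the first dihedral group is therefore faithful on
`⟨ρ0, ρ1⟩` and kills `ρ2`, and symmetrically for the projection `β` and `⟨ρ1, ρ2⟩`; this alone
determines the orders of the products and forces the intersection property.

The property survives every quotient by a normal subgroup of `A = ker α ∩ ker β`, which is a
`2`-group of index `2MN` in the generated group. Quotients `D ≀ C₂` of `[4, 4]`, with `D` dihedral,
make `A` arbitrarily large, and a normal `2`-subgroup contains normal subgroups of all smaller
`2`-power orders, so every order `2 ^ j * 2MN` is attained.
-/

open DihedralGroup

theorem normal_of_le_center {G : Type*} [Group G] {H : Subgroup G} (hH : H ≤ Subgroup.center G) :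
    H.Normal where
  conj_mem h hh g := by rwa [Subgroup.mem_center_iff.1 (hH hh) g, mul_inv_cancel_right]

theorem card_comap_of_surjective {G H : Type*} [Group G] [Group H] {f : G →* H}
    (hf : Function.Surjective f) (K : Subgroup H) :
    Nat.card (K.comap f) = Nat.card f.ker * Nat.card K := by
  have h := Subgroup.relIndex_mul_relIndex ⊥ f.ker (K.comap f) bot_le (Subgroup.ker_le_comap f K)
  rw [Subgroup.relIndex_bot_left, Subgroup.relIndex_bot_left, Subgroup.relIndex_ker,
    Subgroup.map_comap_eq_self_of_surjective hf] at h
  exact h.symm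

theorem card_map_of_disjoint_ker {G H : Type*} [Group G] [Group H] {f : G →* H} {B : Subgroup G}
    (hB : Disjoint B f.ker) : Nat.card (B.map f) = Nat.card B := by
  rw [← Subgroup.relIndex_ker, ← Subgroup.inf_relIndex_right, inf_comm, hB.eq_bot,
    Subgroup.relIndex_bot_left]

section PGroup

variable {p : ℕ} [Fact p.Prime] {P : Type*} [Group P] [Finite P]

theorem exists_mem_center_orderOf_eq_prime (hP : IsPGroup p P) {K : Subgroup P} [K.Normal]
    (hK : K ≠ ⊥) : ∃ z ∈ K, z ∈ Subgroup.center P ∧ orderOf z = p := by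
  have dvd_card {H : Subgroup P} (hH : H ≠ ⊥) : p ∣ Nat.card H :=
    (hP.to_subgroup H).card_eq_or_dvd.resolve_left fun h => hH (H.card_eq_one.1 h)
  have hconj : IsPGroup p (ConjAct P) := hP.of_equiv ConjAct.toConjAct
  obtain ⟨w, hw, hw1⟩ := hconj.exists_fixed_point_of_prime_dvd_card_of_fixed_point K (dvd_card hK)
    (a := 1) fun g => by simp
  have hwc : (w : P) ∈ Subgroup.center P := by
    rw [← SetLike.mem_coe, ← ConjAct.fixedPoints_eq_center]
    exact fun g => congrArg Subtype.val (hw g)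
  have hne : K ⊓ Subgroup.center P ≠ ⊥ := fun h =>
    hw1 (Subtype.ext ((Subgroup.eq_bot_iff_forall _).1 h w ⟨w.2, hwc⟩).symm)
  obtain ⟨z, hz⟩ := exists_prime_orderOf_dvd_card' p (dvd_card hne)
  exact ⟨z, z.2.1, z.2.2, by rw [Subgroup.orderOf_coe, hz]⟩

theorem exists_normal_le_card_eq_pow (hP : IsPGroup p P) {K : Subgroup P} [K.Normal] {i : ℕ}
    (hi : p ^ i ∣ Nat.card K) : ∃ L ≤ K, L.Normal ∧ Nat.card L = p ^ i := by
  induction i with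
  | zero => exact ⟨⊥, bot_le, inferInstance, by simp⟩
  | succ i ih =>
    obtain ⟨L, hLK, _, hL⟩ := ih ((pow_dvd_pow p i.le_succ).trans hi)
    let q := QuotientGroup.mk' L
    have hq : q.ker = L := QuotientGroup.ker_mk' L
    have : (K.map q).Normal := ‹K.Normal›.map q (QuotientGroup.mk'_surjective L)
    have hne : K.map q ≠ ⊥ := by
      rw [Ne, Subgroup.map_eq_bot_iff, hq]
      intro hKL
      have : p ^ (i + 1) ∣ p ^ i := hL ▸ hi.trans (Subgroup.card_dvd_of_le hKL)
      exact absurd (Nat.le_of_dvd (pow_pos (Fact.out : p.Prime).pos i) this)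
        (Nat.pow_lt_pow_succ (Fact.out : p.Prime).one_lt).not_ge
    obtain ⟨z, hzK, hzc, hz⟩ := exists_mem_center_orderOf_eq_prime (hP.to_quotient L) hne
    have : (Subgroup.zpowers z).Normal :=
      normal_of_le_center (Subgroup.zpowers_le.2 hzc)
    refine ⟨(Subgroup.zpowers z).comap q, ?_, inferInstance, ?_⟩
    · refine (Subgroup.comap_mono (Subgroup.zpowers_le.2 hzK)).trans ?_
      rw [Subgroup.comap_map_eq_self (hq.trans_le hLK)]
    · rw [card_comap_of_surjective (QuotientGroup.mk'_surjective L), hq, hL, Nat.card_zpowers, hz,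
        pow_succ]

theorem exists_normal_le_card_eq_pow_of_disjoint_ker {G : Type*} [Group G] (f : G →* P)
    (hP : IsPGroup p P) {A : Subgroup G} [A.Normal] (hA : Disjoint A f.ker) {i : ℕ}
    (hi : p ^ i ∣ Nat.card A) : ∃ L ≤ A, L.Normal ∧ Nat.card L = p ^ i := by
  let φ := f.rangeRestrict
  have card_map {B : Subgroup G} (hB : B ≤ A) : Nat.card (B.map φ) = Nat.card B :=
    card_map_of_disjoint_ker <| f.ker_rangeRestrict ▸ hA.mono_left hB
  have : (A.map φ).Normal := ‹A.Normal›.map φ f.rangeRestrict_surjective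
  obtain ⟨L, hLA, _, hL⟩ := exists_normal_le_card_eq_pow (hP.to_subgroup f.range)
    (K := A.map φ) (by rwa [card_map le_rfl])
  refine ⟨A ⊓ L.comap φ, inf_le_left, inferInstance, ?_⟩
  have hmap : (A ⊓ L.comap φ).map φ = L :=
    SetLike.coe_injective <| (Set.image_inter_preimage φ A L).trans (Set.inter_eq_right.2 hLA)
  rw [← card_map inf_le_left, hmap, hL]

end PGroup

section Closure

variable {ι G H : Type*} [Group G] [Group H] {a b : ι}

theorem closure_image_inf_closure_image_le_of_forall_eq_one {σ : ι → H}
    (hσ : ∀ i, i ≠ a → i ≠ b → σ i = 1)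
    (hdisj : Pairwise fun i j => Disjoint (Subgroup.zpowers (σ i)) (Subgroup.zpowers (σ j)))
    {I : Set ι} (hI : I ⊆ {a, b}) (J : Set ι) :
    Subgroup.closure (σ '' I) ⊓ Subgroup.closure (σ '' J) ≤ Subgroup.closure (σ '' (I ∩ J)) := by
  by_cases hIJ : I ⊆ J
  · rw [Set.inter_eq_left.2 hIJ]
    exact inf_le_left
  obtain ⟨i, hiI, hiJ⟩ := Set.not_subset.1 hIJ
  by_cases hJI : ∀ j ∈ J, j ∈ I ∨ σ j = 1
  · refine inf_le_right.trans ((Subgroup.closure_le _).2 ?_)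
    rintro _ ⟨j, hj, rfl⟩
    rcases hJI j hj with hjI | hj1
    · exact Subgroup.subset_closure ⟨j, ⟨hjI, hj⟩, rfl⟩
    · exact hj1 ▸ one_mem _
  · push Not at hJI
    obtain ⟨j, -, hjI, hj1⟩ := hJI
    have hij : i ≠ j := by grind
    have hI : Subgroup.closure (σ '' I) ≤ Subgroup.zpowers (σ i) := by
      rw [Subgroup.closure_le]
      rintro _ ⟨k, hk, rfl⟩
      have : k = i := by grind
      exact this ▸ Subgroup.mem_zpowers _
    have hJ : Subgroup.closure (σ '' J) ≤ Subgroup.zpowers (σ j) := by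
      rw [Subgroup.closure_le]
      rintro _ ⟨k, hk, rfl⟩
      by_cases hk1 : σ k = 1
      · exact hk1 ▸ one_mem _
      have : k = j := by grind
      exact this ▸ Subgroup.mem_zpowers _
    exact ((hdisj hij).mono hI hJ).le_bot.trans bot_le

theorem closure_image_inf_closure_image_le_of_injOn {ρ : ι → G} {f : G →* H}
    (hf : Set.InjOn f (Subgroup.closure {ρ a, ρ b}))
    (hρ : ∀ i, i ≠ a → i ≠ b → f (ρ i) = 1)
    (hdisj : Pairwise fun i j =>
      Disjoint (Subgroup.zpowers (f (ρ i))) (Subgroup.zpowers (f (ρ j))))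
    {I : Set ι} (hI : I ⊆ {a, b}) (J : Set ι) :
    Subgroup.closure (ρ '' I) ⊓ Subgroup.closure (ρ '' J) ≤ Subgroup.closure (ρ '' (I ∩ J)) := by
  have map_closure (K : Set ι) :
      (Subgroup.closure (ρ '' K)).map f = Subgroup.closure ((f ∘ ρ) '' K) := by
    rw [MonoidHom.map_closure, Set.image_comp]
  have hle {K : Set ι} (hK : K ⊆ I) :
      Subgroup.closure (ρ '' K) ≤ Subgroup.closure {ρ a, ρ b} :=
    Subgroup.closure_mono (Set.image_pair ρ a b ▸ Set.image_mono (hK.trans hI))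
  rintro g ⟨hgI, hgJ⟩
  have hfg : f g ∈ (Subgroup.closure (ρ '' (I ∩ J))).map f := by
    rw [map_closure]
    refine closure_image_inf_closure_image_le_of_forall_eq_one hρ hdisj hI J ⟨?_, ?_⟩
    · exact map_closure I ▸ Subgroup.mem_map_of_mem f hgI
    · exact map_closure J ▸ Subgroup.mem_map_of_mem f hgJ
  obtain ⟨h, hh, hhg⟩ := hfg
  exact hf (hle Set.inter_subset_left hh) (hle subset_rfl hgI) hhg ▸ hh

theorem interProp_of_forall_subset {ρ : Fin 3 → G}
    (h : ∀ I J : Set (Fin 3), I ⊆ {0, 1} ∨ I ⊆ {2, 1} →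
      Subgroup.closure (ρ '' I) ⊓ Subgroup.closure (ρ '' J) ≤ Subgroup.closure (ρ '' (I ∩ J))) :
    InterProp ρ := by
  intro I J
  refine le_antisymm ?_ (le_inf (Subgroup.closure_mono (Set.image_mono Set.inter_subset_left))
    (Subgroup.closure_mono (Set.image_mono Set.inter_subset_right)))
  by_cases hI : I ⊆ {0, 1} ∨ I ⊆ {2, 1}
  · exact h I J hI
  by_cases hJ : J ⊆ {0, 1} ∨ J ⊆ {2, 1}
  · rw [inf_comm, Set.inter_comm]
    exact h J I hJ
  have h02 (K : Set (Fin 3)) (hK : ¬(K ⊆ {0, 1} ∨ K ⊆ {2, 1})) : 0 ∈ K ∧ 2 ∈ K := by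
    simpa [Set.subset_def, Fin.forall_fin_succ, and_comm] using hK
  by_cases h1 : 1 ∈ I
  · have : J ⊆ I := fun j _ => by fin_cases j <;> grind
    rw [Set.inter_eq_right.2 this]
    exact inf_le_right
  · have : I ⊆ J := fun i hi => by fin_cases i <;> grind
    rw [Set.inter_eq_left.2 this]
    exact inf_le_left

end Closure

section DihedralLift

variable {n : ℕ} {G : Type*} [Group G] {x y : G}

/-- The homomorphism `r i ↦ g ^ i`, written additively, from the rotations of `DihedralGroup n` to a
group `G` with an element `g` satisfying `g ^ n = 1`. -/
def rotationLift {g : G} (hg : g ^ n = 1) : ZMod n →+ Additive G :=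
  ZMod.lift n ⟨zmultiplesHom (Additive G) (Additive.ofMul g), by
    rw [zmultiplesHom_apply, natCast_zsmul, ← ofMul_pow, hg, ofMul_one]⟩

theorem toMul_rotationLift_intCast {g : G} (hg : g ^ n = 1) (k : ℤ) :
    (rotationLift hg k).toMul = g ^ k := by
  rw [rotationLift, ZMod.lift_coe]
  rfl

theorem toMul_rotationLift_mul (hx : x * x = 1) (hy : y * y = 1) (hxy : (x * y) ^ n = 1)
    (i : ZMod n) :
    (rotationLift hxy i).toMul * x = x * (rotationLift hxy (-i)).toMul := by
  have hconj : SemiconjBy x (x * y)⁻¹ (x * y) := by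
    rw [SemiconjBy, mul_inv_rev, inv_eq_of_mul_eq_one_left hx, inv_eq_of_mul_eq_one_left hy,
      mul_assoc]
  obtain ⟨k, rfl⟩ := ZMod.intCast_surjective i
  rw [← Int.cast_neg, toMul_rotationLift_intCast, toMul_rotationLift_intCast, zpow_neg,
    ← inv_zpow]
  exact (hconj.zpow_right k).eq.symm

/-- The homomorphism out of `DihedralGroup n`, viewed as generated by the involutions `sr 0` and
`sr 1`, sending these to `x` and `y`. -/
def dihedralLift (hx : x * x = 1) (hy : y * y = 1) (hxy : (x * y) ^ n = 1) :
    DihedralGroup n →* G where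
  toFun
    | r i => (rotationLift hxy i).toMul
    | sr i => x * (rotationLift hxy i).toMul
  map_one' := by simp only [one_def, map_zero, toMul_zero]
  map_mul' := by
    have rot_mul := toMul_rotationLift_mul hx hy hxy
    rintro (i | i) (j | j)
    · simp only [r_mul_r, map_add, toMul_add]
    · simp only [r_mul_sr, sub_eq_neg_add, map_add, toMul_add, ← mul_assoc, rot_mul]
    · simp only [sr_mul_r, map_add, toMul_add, mul_assoc]
    · simp only [sr_mul_sr, sub_eq_neg_add, map_add, toMul_add]
      rw [← mul_assoc, mul_assoc x, rot_mul, ← mul_assoc x, hx, one_mul]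

variable (hx : x * x = 1) (hy : y * y = 1) (hxy : (x * y) ^ n = 1)

theorem dihedralLift_sr_zero : dihedralLift hx hy hxy (sr 0) = x :=
  (congrArg (x * ·) (congrArg Additive.toMul (map_zero _))).trans (mul_one x)

theorem dihedralLift_sr_one : dihedralLift hx hy hxy (sr 1) = y := by
  have h : (rotationLift hxy 1).toMul = x * y := by
    simpa only [Int.cast_one, zpow_one] using toMul_rotationLift_intCast hxy 1
  exact (congrArg (x * ·) h).trans (by rw [← mul_assoc, hx, one_mul])

end DihedralLift

theorem sr_zero_mul_sr_one_zpow {n : ℕ} (k : ℤ) :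
    (sr 0 * sr 1 : DihedralGroup n) ^ k = r k := by
  rw [sr_mul_sr, sub_zero, r_one_zpow]

theorem sr_zero_mul_r {n : ℕ} (i : ZMod n) : sr 0 * r i = sr i := by
  rw [sr_mul_r, zero_add]

theorem closure_sr_zero_sr_one (n : ℕ) :
    Subgroup.closure {sr 0, (sr 1 : DihedralGroup n)} = ⊤ := by
  have hsr : sr 0 ∈ Subgroup.closure {sr 0, (sr 1 : DihedralGroup n)} :=
    Subgroup.subset_closure (by simp)
  have hr (i : ZMod n) : r i ∈ Subgroup.closure {sr 0, (sr 1 : DihedralGroup n)} := by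
    obtain ⟨k, rfl⟩ := ZMod.intCast_surjective i
    rw [← sr_zero_mul_sr_one_zpow]
    exact zpow_mem (mul_mem hsr (Subgroup.subset_closure (by simp))) k
  refine eq_top_iff.2 ?_
  rintro (i | i) -
  · exact hr i
  · exact sr_zero_mul_r i ▸ mul_mem hsr (hr i)

section DihedralParity

variable {n : ℕ}

/-- The sign character of `DihedralGroup n`, for even `n`, that is trivial on `sr 0` but not on
`sr 1`: it records the parity of the index of a rotation or reflection. -/
def dihedralParity (hn : Even n) : DihedralGroup n →* Multiplicative (ZMod 2) :=
  dihedralLift (x := 1) (y := Multiplicative.ofAdd 1) (one_mul 1) (by decide) <| by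
    obtain ⟨k, rfl⟩ := hn.two_dvd
    rw [pow_mul, one_mul]
    exact one_pow k

theorem dihedralParity_sr_zero (hn : Even n) : dihedralParity hn (sr 0) = 1 :=
  dihedralLift_sr_zero ..

theorem dihedralParity_sr_one (hn : Even n) :
    dihedralParity hn (sr 1) = Multiplicative.ofAdd 1 :=
  dihedralLift_sr_one ..

theorem dihedralParity_r_intCast (hn : Even n) (k : ℤ) :
    dihedralParity hn (r k) = Multiplicative.ofAdd (k : ZMod 2) := by
  rw [← sr_zero_mul_sr_one_zpow, map_zpow, map_mul, dihedralParity_sr_zero, dihedralParity_sr_one,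
    one_mul, ← ofAdd_zsmul, zsmul_one]

theorem ker_dihedralParity_le_closure (hn : Even n) :
    (dihedralParity hn).ker ≤ Subgroup.closure {sr 0, r 2} := by
  have hsr : sr 0 ∈ Subgroup.closure {sr 0, (r 2 : DihedralGroup n)} :=
    Subgroup.subset_closure (by simp)
  have hr : r 2 ∈ Subgroup.closure {sr 0, (r 2 : DihedralGroup n)} :=
    Subgroup.subset_closure (by simp)
  have rotation_mem (i : ZMod n) (hi : dihedralParity hn (r i) = 1) :
      r i ∈ Subgroup.closure {sr 0, (r 2 : DihedralGroup n)} := by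
    obtain ⟨k, rfl⟩ := ZMod.intCast_surjective i
    rw [dihedralParity_r_intCast, ofAdd_eq_one] at hi
    obtain ⟨m, rfl⟩ := (ZMod.intCast_zmod_eq_zero_iff_dvd k 2).1 hi
    have hm := zpow_mem hr m
    rw [r_zpow] at hm
    push_cast
    exact hm
  rintro (i | i) hi
  · exact rotation_mem i hi
  · rw [MonoidHom.mem_ker, ← sr_zero_mul_r, map_mul, dihedralParity_sr_zero, one_mul] at hi
    exact sr_zero_mul_r i ▸ mul_mem hsr (rotation_mem i hi)

theorem card_ker_dihedralParity (hn : Even n) : Nat.card (dihedralParity hn).ker = n := by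
  have hsurj : (dihedralParity hn).range = ⊤ := by
    refine eq_top_iff.2 fun z _ => ?_
    have eq_one_or_eq : ∀ z : Multiplicative (ZMod 2), z = 1 ∨ z = .ofAdd 1 := by decide
    rcases eq_one_or_eq z with rfl | rfl
    · exact one_mem _
    · exact ⟨sr 1, dihedralParity_sr_one hn⟩
  have h := (dihedralParity hn).ker.card_mul_index
  rw [Subgroup.index_ker, hsurj, Subgroup.card_top, nat_card, mul_comm 2,
    Nat.card_congr Multiplicative.toAdd, Nat.card_zmod] at h
  exact Nat.eq_of_mul_eq_mul_right two_pos h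

end DihedralParity

theorem eq_one_or_eq_of_mem_zpowers {G : Type*} [Group G] {x g : G} (hx : x * x = 1)
    (hg : g ∈ Subgroup.zpowers x) : g = 1 ∨ g = x := by
  obtain ⟨k, rfl⟩ := hg
  have hx2 : x ^ (2 : ℤ) = 1 := (zpow_two x).trans hx
  rcases k.even_or_odd' with ⟨m, rfl | rfl⟩
  · exact .inl (by simp only [zpow_mul, hx2, one_zpow])
  · exact .inr (by simp only [zpow_add, zpow_mul, hx2, one_zpow, zpow_one, one_mul])

theorem disjoint_zpowers_of_mul_self {G : Type*} [Group G] {x y : G} (hx : x * x = 1)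
    (hy : y * y = 1) (hxy : x ≠ y) : Disjoint (Subgroup.zpowers x) (Subgroup.zpowers y) := by
  rw [Subgroup.disjoint_def]
  intro g hgx hgy
  rcases eq_one_or_eq_of_mem_zpowers hx hgx with rfl | rfl
  · rfl
  · exact (eq_one_or_eq_of_mem_zpowers hy hgy).resolve_right hxy

/-- `f` restricts to an isomorphism from the subgroup generated by `x` and `y` onto
`DihedralGroup n` taking `x` and `y` to the standard generators `sr 0` and `sr 1`. -/
structure IsDihedralPair {n : ℕ} {G : Type*} [Group G] (f : G →* DihedralGroup n) (x y : G) :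
    Prop where
  injOn : Set.InjOn f (Subgroup.closure {x, y})
  map_left : f x = sr 0
  map_right : f y = sr 1

namespace IsDihedralPair

variable {n : ℕ} {G H : Type*} [Group G] [Group H] {f : G →* DihedralGroup n} {x y : G}

theorem of_relations (hx : x * x = 1) (hy : y * y = 1) (hxy : (x * y) ^ n = 1)
    (hfx : f x = sr 0) (hfy : f y = sr 1) : IsDihedralPair f x y where
  injOn := by
    have hinv : Set.EqOn ((dihedralLift hx hy hxy).comp f) (MonoidHom.id G)
        (Subgroup.closure {x, y}) := by
      refine MonoidHom.eqOn_closure ?_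
      rintro _ (rfl | rfl)
      · exact (congrArg _ hfx).trans (dihedralLift_sr_zero hx hy hxy)
      · exact (congrArg _ hfy).trans (dihedralLift_sr_one hx hy hxy)
    exact Set.LeftInvOn.injOn (f₁' := dihedralLift hx hy hxy) hinv
  map_left := hfx
  map_right := hfy

theorem orderOf_map (h : IsDihedralPair f x y) {g : G} (hg : g ∈ Subgroup.closure {x, y}) :
    orderOf (f g) = orderOf g :=
  orderOf_eq_orderOf_iff.2 fun k => by
    rw [← map_pow, ← map_one f, h.injOn.eq_iff (pow_mem hg k) (one_mem _)]

theorem orderOf_left (h : IsDihedralPair f x y) : orderOf x = 2 := by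
  rw [← h.orderOf_map (Subgroup.subset_closure (by simp)), h.map_left, orderOf_sr]

theorem orderOf_right (h : IsDihedralPair f x y) : orderOf y = 2 := by
  rw [← h.orderOf_map (Subgroup.subset_closure (by simp)), h.map_right, orderOf_sr]

theorem orderOf_mul (h : IsDihedralPair f x y) : orderOf (x * y) = n := by
  rw [← h.orderOf_map (mul_mem (Subgroup.subset_closure (by simp))
    (Subgroup.subset_closure (by simp))), map_mul, h.map_left, h.map_right, sr_mul_sr, sub_zero,
    orderOf_r_one]

theorem of_comp {q : G →* H} {f : H →* DihedralGroup n} (h : IsDihedralPair (f.comp q) x y) :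
    IsDihedralPair f (q x) (q y) where
  injOn := by
    rw [← Set.image_pair, ← MonoidHom.map_closure, Subgroup.coe_map]
    exact Set.InjOn.image_of_comp (show Set.InjOn (f ∘ q) _ from h.injOn)
  map_left := h.map_left
  map_right := h.map_right

theorem comp_of_injective {i : H →* G} (hi : Function.Injective i) {x y : H}
    (h : IsDihedralPair f (i x) (i y)) : IsDihedralPair (f.comp i) x y where
  injOn := by
    refine h.injOn.comp hi.injOn fun g hg => ?_
    rw [← Set.image_pair, ← MonoidHom.map_closure]
    exact Subgroup.mem_map_of_mem i hg
  map_left := h.map_left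
  map_right := h.map_right

theorem pairwise_disjoint_zpowers {ι : Type*} {ρ : ι → G} {a b : ι}
    (h : IsDihedralPair f (ρ a) (ρ b)) (hn : n ≠ 1) (hρ : ∀ i, i ≠ a → i ≠ b → f (ρ i) = 1) :
    Pairwise fun i j =>
      Disjoint (Subgroup.zpowers (f (ρ i))) (Subgroup.zpowers (f (ρ j))) := by
  have : Nontrivial (ZMod n) := ZMod.nontrivial_iff.2 hn
  have hab : Disjoint (Subgroup.zpowers (f (ρ a))) (Subgroup.zpowers (f (ρ b))) := by
    rw [h.map_left, h.map_right]
    exact disjoint_zpowers_of_mul_self (sr_mul_self 0) (sr_mul_self 1) (by simp)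
  intro i j hij
  by_cases hi : f (ρ i) = 1
  · simp only [hi, Subgroup.zpowers_one_eq_bot, disjoint_bot_left]
  by_cases hj : f (ρ j) = 1
  · simp only [hj, Subgroup.zpowers_one_eq_bot, disjoint_bot_right]
  obtain ⟨rfl, rfl⟩ | ⟨rfl, rfl⟩ : i = a ∧ j = b ∨ i = b ∧ j = a := by grind
  exacts [hab, hab.symm]

theorem closure_image_inf_closure_image_le {ι : Type*} {ρ : ι → G} {a b : ι}
    (h : IsDihedralPair f (ρ a) (ρ b)) (hn : n ≠ 1) (hρ : ∀ i, i ≠ a → i ≠ b → f (ρ i) = 1)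
    {I : Set ι} (hI : I ⊆ {a, b}) (J : Set ι) :
    Subgroup.closure (ρ '' I) ⊓ Subgroup.closure (ρ '' J) ≤ Subgroup.closure (ρ '' (I ∩ J)) :=
  closure_image_inf_closure_image_le_of_injOn h.injOn hρ (h.pairwise_disjoint_zpowers hn hρ) hI J

end IsDihedralPair

/-- `α` and `β` map the dihedral subgroups `⟨ρ0, ρ1⟩` and `⟨ρ2, ρ1⟩` isomorphically onto standard
dihedral groups and kill the remaining generator. This packages the orders and the intersection
property of a string C-group of type `{M, N}` in a form that passes to subgroups and quotients. -/
structure IsDihedralTriple {M N : ℕ} {G : Type*} [Group G] (α : G →* DihedralGroup M)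
    (β : G →* DihedralGroup N) (ρ0 ρ1 ρ2 : G) : Prop where
  pair_left : IsDihedralPair α ρ0 ρ1
  pair_right : IsDihedralPair β ρ2 ρ1
  map_right : α ρ2 = 1
  map_left : β ρ0 = 1
  commute : Commute ρ0 ρ2

namespace IsDihedralTriple

variable {M N : ℕ} {G H : Type*} [Group G] [Group H] {α : G →* DihedralGroup M}
  {β : G →* DihedralGroup N} {ρ0 ρ1 ρ2 : G}

theorem orderOf_mul_left (h : IsDihedralTriple α β ρ0 ρ1 ρ2) : orderOf (ρ0 * ρ1) = M :=
  h.pair_left.orderOf_mul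

theorem orderOf_mul_right (h : IsDihedralTriple α β ρ0 ρ1 ρ2) : orderOf (ρ1 * ρ2) = N := by
  have hinv {x : G} (hx : orderOf x = 2) : x⁻¹ = x :=
    inv_eq_of_mul_eq_one_left (by rw [← pow_two, ← hx, pow_orderOf_eq_one])
  rw [← h.pair_right.orderOf_mul, ← orderOf_inv (ρ2 * ρ1), mul_inv_rev,
    hinv h.pair_right.orderOf_left, hinv h.pair_right.orderOf_right]

theorem orderOf_mul_outer (h : IsDihedralTriple α β ρ0 ρ1 ρ2) : orderOf (ρ0 * ρ2) = 2 := by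
  refine orderOf_eq_prime ?_ fun h1 => ?_
  · rw [h.commute.mul_pow, ← h.pair_left.orderOf_left, pow_orderOf_eq_one,
      h.pair_left.orderOf_left, ← h.pair_right.orderOf_left, pow_orderOf_eq_one, mul_one]
  · have hα := congrArg α h1
    rw [map_mul, h.pair_left.map_left, h.map_right, mul_one, map_one] at hα
    exact absurd (orderOf_sr (0 : ZMod M)) (by rw [hα, orderOf_one]; decide)

theorem of_comp {q : G →* H} {α : H →* DihedralGroup M} {β : H →* DihedralGroup N}
    (h : IsDihedralTriple (α.comp q) (β.comp q) ρ0 ρ1 ρ2) :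
    IsDihedralTriple α β (q ρ0) (q ρ1) (q ρ2) where
  pair_left := h.pair_left.of_comp
  pair_right := h.pair_right.of_comp
  map_right := h.map_right
  map_left := h.map_left
  commute := h.commute.map q

theorem comp_of_injective {i : H →* G} (hi : Function.Injective i) {ρ0 ρ1 ρ2 : H}
    (h : IsDihedralTriple α β (i ρ0) (i ρ1) (i ρ2)) :
    IsDihedralTriple (α.comp i) (β.comp i) ρ0 ρ1 ρ2 where
  pair_left := h.pair_left.comp_of_injective hi
  pair_right := h.pair_right.comp_of_injective hi
  map_right := h.map_right
  map_left := h.map_left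
  commute := hi <| by simpa only [map_mul] using h.commute.eq

theorem interProp (h : IsDihedralTriple α β ρ0 ρ1 ρ2) (hM : M ≠ 1) (hN : N ≠ 1) :
    InterProp ![ρ0, ρ1, ρ2] := by
  refine interProp_of_forall_subset fun I J hI => hI.elim (fun hI => ?_) fun hI => ?_
  · refine IsDihedralPair.closure_image_inf_closure_image_le (ρ := ![ρ0, ρ1, ρ2]) h.pair_left hM
      (fun i hi0 hi1 => ?_) hI J
    obtain rfl : i = 2 := by lia
    exact h.map_right
  · refine IsDihedralPair.closure_image_inf_closure_image_le (ρ := ![ρ0, ρ1, ρ2]) h.pair_right hN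
      (fun i hi2 hi1 => ?_) hI J
    obtain rfl : i = 0 := by lia
    exact h.map_left

theorem parity_comp_eq (h : IsDihedralTriple α β ρ0 ρ1 ρ2) (hM : Even M) (hN : Even N)
    (hgen : Subgroup.closure {ρ0, ρ1, ρ2} = ⊤) :
    (dihedralParity hM).comp α = (dihedralParity hN).comp β := by
  refine MonoidHom.eq_of_eqOn_dense hgen ?_
  rintro _ (rfl | rfl | rfl)
  · simp only [MonoidHom.comp_apply, h.pair_left.map_left, h.map_left, dihedralParity_sr_zero,
      map_one]
  · simp only [MonoidHom.comp_apply, h.pair_left.map_right, h.pair_right.map_right,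
      dihedralParity_sr_one]
  · simp only [MonoidHom.comp_apply, h.map_right, h.pair_right.map_left, dihedralParity_sr_zero,
      map_one]

theorem map_ker_eq (h : IsDihedralTriple α β ρ0 ρ1 ρ2) (hM : Even M) (hN : Even N)
    (hgen : Subgroup.closure {ρ0, ρ1, ρ2} = ⊤) : α.ker.map β = (dihedralParity hN).ker := by
  refine le_antisymm ?_ ((ker_dihedralParity_le_closure hN).trans ((Subgroup.closure_le _).2 ?_))
  · rintro _ ⟨g, hg, rfl⟩
    have hα : α g = 1 := hg
    have := DFunLike.congr_fun (h.parity_comp_eq hM hN hgen) g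
    rw [MonoidHom.comp_apply, hα, map_one] at this
    exact this.symm
  · rintro _ (rfl | rfl)
    · exact ⟨ρ2, h.map_right, h.pair_right.map_left⟩
    · refine ⟨(ρ2 * ρ1) ^ 2, ?_, ?_⟩
      · change α ((ρ2 * ρ1) ^ 2) = 1
        rw [map_pow, map_mul, h.map_right, h.pair_left.map_right, one_mul, pow_two, sr_mul_self]
      · rw [map_pow, map_mul, h.pair_right.map_left, h.pair_right.map_right, sr_mul_sr, sub_zero,
          r_one_pow, Nat.cast_two]

theorem surjective_left (h : IsDihedralTriple α β ρ0 ρ1 ρ2) : Function.Surjective α := by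
  rw [← MonoidHom.range_eq_top, eq_top_iff, ← closure_sr_zero_sr_one, Subgroup.closure_le]
  rintro _ (rfl | rfl)
  exacts [⟨ρ0, h.pair_left.map_left⟩, ⟨ρ1, h.pair_left.map_right⟩]

theorem card_eq (h : IsDihedralTriple α β ρ0 ρ1 ρ2) (hM : Even M) (hN : Even N)
    (hgen : Subgroup.closure {ρ0, ρ1, ρ2} = ⊤) :
    Nat.card G = Nat.card ↥(α.ker ⊓ β.ker) * (2 * M * N) := by
  have hα : Nat.card G = Nat.card α.ker * (2 * M) := by
    rw [← α.ker.card_mul_index, Subgroup.index_ker, MonoidHom.range_eq_top.2 h.surjective_left,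
      Subgroup.card_top, nat_card]
  have hβ : Nat.card α.ker = Nat.card ↥(α.ker ⊓ β.ker) * N := by
    have hmul := Subgroup.relIndex_mul_relIndex ⊥ (α.ker ⊓ β.ker) α.ker bot_le inf_le_left
    rw [Subgroup.relIndex_bot_left, Subgroup.relIndex_bot_left, Subgroup.inf_relIndex_left,
      Subgroup.relIndex_ker, h.map_ker_eq hM hN hgen, card_ker_dihedralParity] at hmul
    exact hmul.symm
  rw [hα, hβ, mul_assoc, mul_comm N]

end IsDihedralTriple

/-- `(x0, x1, x2)` satisfies the defining relations of the string Coxeter group `[M, N]`. -/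
structure IsCoxeterTriple {T : Type*} [Group T] (M N : ℕ) (x0 x1 x2 : T) : Prop where
  left_mul_self : x0 * x0 = 1
  mid_mul_self : x1 * x1 = 1
  right_mul_self : x2 * x2 = 1
  commute : Commute x0 x2
  pow_left : (x0 * x1) ^ M = 1
  pow_right : (x2 * x1) ^ N = 1

namespace IsCoxeterTriple

variable {T : Type*} [Group T] {M N : ℕ} {x0 x1 x2 : T}

theorem of_dvd {m n : ℕ} (h : IsCoxeterTriple m n x0 x1 x2) (hM : m ∣ M) (hN : n ∣ N) :
    IsCoxeterTriple M N x0 x1 x2 where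
  __ := h
  pow_left := orderOf_dvd_iff_pow_eq_one.1 ((orderOf_dvd_of_pow_eq_one h.pow_left).trans hM)
  pow_right := orderOf_dvd_iff_pow_eq_one.1 ((orderOf_dvd_of_pow_eq_one h.pow_right).trans hN)

theorem isDihedralTriple_mix (h : IsCoxeterTriple M N x0 x1 x2) (hM : Even M) (hN : Even N) :
    IsDihedralTriple (MonoidHom.fst (DihedralGroup M) (DihedralGroup N × T))
      ((MonoidHom.fst (DihedralGroup N) T).comp (MonoidHom.snd (DihedralGroup M) _))
      (sr 0, 1, x0) (sr 1, sr 1, x1) (1, sr 0, x2) where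
  pair_left := by
    refine IsDihedralPair.of_relations ?_ ?_ ?_ rfl rfl
    · simp [h.left_mul_self]
    · simp [h.mid_mul_self]
    · obtain ⟨m, rfl⟩ := hM.two_dvd
      ext1
      · simp
      ext1
      · simp [pow_mul, pow_two]
      · simp [h.pow_left]
  pair_right := by
    refine IsDihedralPair.of_relations ?_ ?_ ?_ rfl rfl
    · simp [h.right_mul_self]
    · simp [h.mid_mul_self]
    · obtain ⟨m, rfl⟩ := hN.two_dvd
      ext1
      · simp [pow_mul, pow_two]
      ext1
      · simp
      · simp [h.pow_right]
  map_right := rfl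
  map_left := rfl
  commute := by simp [Commute, SemiconjBy, h.commute.eq]

end IsCoxeterTriple

universe u in
theorem IsDihedralTriple.exists_card_eq {M N j : ℕ} {Γ : Type u} [Group Γ] [Finite Γ]
    {α : Γ →* DihedralGroup M} {β : Γ →* DihedralGroup N} {ρ0 ρ1 ρ2 : Γ}
    (h : IsDihedralTriple α β ρ0 ρ1 ρ2) (hM : Even M) (hN : Even N)
    (hgen : Subgroup.closure {ρ0, ρ1, ρ2} = ⊤) {P : Type*} [Group P] [Finite P]
    (hP : IsPGroup 2 P) {γ : Γ →* P} (hγ : Disjoint (α.ker ⊓ β.ker) γ.ker)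
    (hj : 2 ^ j * (2 * M * N) ≤ Nat.card Γ) :
    ∃ (G : Type u) (_ : Group G) (α : G →* DihedralGroup M) (β : G →* DihedralGroup N)
      (ρ0 ρ1 ρ2 : G), IsDihedralTriple α β ρ0 ρ1 ρ2 ∧ Subgroup.closure {ρ0, ρ1, ρ2} = ⊤ ∧
        Nat.card G = 2 ^ j * (2 * M * N) := by
  set A := α.ker ⊓ β.ker
  obtain ⟨a, ha⟩ : ∃ a, Nat.card A = 2 ^ a :=
    card_map_of_disjoint_ker hγ ▸ IsPGroup.iff_card.1 (hP.to_subgroup (A.map γ))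
  have hcard : Nat.card Γ = 2 ^ a * (2 * M * N) := ha ▸ h.card_eq hM hN hgen
  have hpos : 0 < 2 * M * N := Nat.pos_of_mul_pos_left (hcard ▸ Nat.card_pos)
  have hja : j ≤ a := by
    rwa [hcard, Nat.mul_le_mul_right_iff hpos, Nat.pow_le_pow_iff_right one_lt_two] at hj
  obtain ⟨L, hLA, _, hL⟩ := exists_normal_le_card_eq_pow_of_disjoint_ker γ hP hγ (i := a - j)
    (ha ▸ pow_dvd_pow 2 (a.sub_le j))
  let q := QuotientGroup.mk' L
  let α' := QuotientGroup.lift L α (hLA.trans inf_le_left)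
  let β' := QuotientGroup.lift L β (hLA.trans inf_le_right)
  refine ⟨Γ ⧸ L, inferInstance, α', β', q ρ0, q ρ1, q ρ2, ?_, ?_, ?_⟩
  · exact IsDihedralTriple.of_comp (q := q) (α := α') (β := β') h
  · have := congrArg (Subgroup.map q) hgen
    rwa [MonoidHom.map_closure, Subgroup.map_top_of_surjective q (QuotientGroup.mk'_surjective L),
      Set.image_insert_eq, Set.image_pair] at this
  · have hmul := L.card_eq_card_quotient_mul_card_subgroup
    rw [hcard, hL, ← Nat.sub_add_cancel hja, pow_add, Nat.add_sub_cancel, mul_assoc,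
      mul_comm] at hmul
    exact (Nat.eq_of_mul_eq_mul_right (by positivity) hmul).symm

universe u in
theorem IsCoxeterTriple.exists_isDihedralTriple_card_eq {M N j : ℕ} [NeZero M] [NeZero N]
    {P : Type u} [Group P] [Finite P] (hP : IsPGroup 2 P) {x0 x1 x2 : P}
    (h : IsCoxeterTriple M N x0 x1 x2) (hM : Even M) (hN : Even N)
    (hj : 2 ^ j * (2 * M * N) ≤ Nat.card (Subgroup.closure {x0, x1, x2})) :
    ∃ (G : Type u) (_ : Group G) (α : G →* DihedralGroup M) (β : G →* DihedralGroup N)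
      (ρ0 ρ1 ρ2 : G), IsDihedralTriple α β ρ0 ρ1 ρ2 ∧ Subgroup.closure {ρ0, ρ1, ρ2} = ⊤ ∧
        Nat.card G = 2 ^ j * (2 * M * N) := by
  let E := DihedralGroup M × DihedralGroup N × P
  let ρ0 : E := (sr 0, 1, x0)
  let ρ1 : E := (sr 1, sr 1, x1)
  let ρ2 : E := (1, sr 0, x2)
  let γ : E →* P := (MonoidHom.snd _ _).comp (MonoidHom.snd _ _)
  let S : Subgroup E := Subgroup.closure {ρ0, ρ1, ρ2}
  let σ0 : S := ⟨ρ0, Subgroup.subset_closure (by simp)⟩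
  let σ1 : S := ⟨ρ1, Subgroup.subset_closure (by simp)⟩
  let σ2 : S := ⟨ρ2, Subgroup.subset_closure (by simp)⟩
  have hgen : Subgroup.closure {σ0, σ1, σ2} = ⊤ := by
    refine Subgroup.map_injective S.subtype_injective ?_
    rw [MonoidHom.map_closure, ← MonoidHom.range_eq_map, S.range_subtype, Set.image_insert_eq,
      Set.image_pair]
    rfl
  have hσ := (h.isDihedralTriple_mix hM hN).comp_of_injective (ρ0 := σ0) (ρ1 := σ1) (ρ2 := σ2)
    S.subtype_injective
  refine hσ.exists_card_eq hM hN hgen hP (γ := γ.comp S.subtype) ?_ (hj.trans ?_)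
  · rw [Subgroup.disjoint_def]
    rintro ⟨⟨a, b, c⟩, _⟩ ⟨ha, hb⟩ hc
    exact Subtype.ext (Prod.ext ha (Prod.ext hb hc))
  · have hγ : S.map γ = Subgroup.closure {x0, x1, x2} := by
      rw [MonoidHom.map_closure, Set.image_insert_eq, Set.image_pair]
      rfl
    exact hγ ▸ Nat.le_of_dvd Nat.card_pos (Subgroup.card_map_dvd S γ)

section Wreath

variable {D : Type*} [Group D]

/-- The wreath product `D ≀ C₂`, with `C₂` realized as `Equiv.Perm Bool` permuting the coordinates
of `Bool → D`. -/
abbrev SwapWreath (D : Type*) [Group D] : Type _ :=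
  (Bool → D) ⋊[mulAutArrow] Equiv.Perm Bool

namespace SwapWreath

open SemidirectProduct

/-- The involution exchanging the two factors. -/
def swap : SwapWreath D := inr (Equiv.swap false true)

/-- The embedding of `D` as the factor with index `i`. -/
def single (i : Bool) : D →* SwapWreath D := inl.comp (MonoidHom.mulSingle (fun _ => D) i)

theorem swap_mul_swap : (swap : SwapWreath D) * swap = 1 := by
  rw [swap, ← map_mul, Equiv.swap_mul_self, map_one]

theorem single_injective (i : Bool) : Function.Injective (single i : D →* SwapWreath D) :=
  inl_injective.comp (Pi.mulSingle_injective (M := fun _ => D) i)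

theorem commute_single {i j : Bool} (hij : i ≠ j) (a b : D) :
    Commute (single i a : SwapWreath D) (single j b) :=
  (Pi.mulSingle_commute (f := fun _ => D) hij a b).map inl

theorem swap_mul_single (i : Bool) (a : D) : swap * single i a = single (!i) a * swap := by
  have hswap : mulAutArrow (Equiv.swap false true) (Pi.mulSingle i a) =
      (Pi.mulSingle (!i) a : Bool → D) := by
    ext k
    cases i <;> cases k <;> rfl
  have hconj := inl_aut (φ := mulAutArrow (A := Bool) (M := D)) (Equiv.swap false true)
    (Pi.mulSingle i a)
  rw [hswap, map_inv, eq_mul_inv_iff_mul_eq] at hconj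
  exact hconj.symm

theorem single_mul_swap_pow_four (i : Bool) {a : D} (ha : a * a = 1) :
    (single i a * swap : SwapWreath D) ^ 4 = 1 := by
  have hsq : (single i a * swap : SwapWreath D) ^ 2 = single i a * single (!i) a := by
    rw [pow_two, mul_assoc, ← mul_assoc swap, swap_mul_single, mul_assoc, swap_mul_swap, mul_one]
  rw [pow_mul _ 2 2, hsq, (commute_single i.not_ne_self.symm a a).mul_pow, ← map_pow, ← map_pow,
    pow_two, ha, map_one, map_one, mul_one]

theorem isCoxeterTriple {a b : D} (ha : a * a = 1) (hb : b * b = 1) :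
    IsCoxeterTriple 4 4 (single true a) swap (single false b) where
  left_mul_self := by rw [← map_mul, ha, map_one]
  mid_mul_self := swap_mul_swap
  right_mul_self := by rw [← map_mul, hb, map_one]
  commute := commute_single (by decide) a b
  pow_left := single_mul_swap_pow_four true ha
  pow_right := single_mul_swap_pow_four false hb

instance [Finite D] : Finite (SwapWreath D) :=
  .of_equiv _ SemidirectProduct.equivProd.symm

theorem orderOf_mul_le_card_closure [Finite D] (a b : D) :
    orderOf (a * b) ≤ Nat.card (Subgroup.closure {single true a, swap, single false b}) := by
  have hmem : single true (a * b) ∈ Subgroup.closure {single true a, swap, single false b} := by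
    have h : single true (a * b) = single true a * (swap * single false b * swap) := by
      rw [swap_mul_single, mul_assoc _ swap, swap_mul_swap, mul_one, Bool.not_false, map_mul]
    rw [h]
    have hswap : swap ∈ Subgroup.closure {single true a, swap, single false b} :=
      Subgroup.subset_closure (by simp)
    exact mul_mem (Subgroup.subset_closure (by simp))
      (mul_mem (mul_mem hswap (Subgroup.subset_closure (by simp))) hswap)
  rw [← orderOf_injective _ (single_injective true), ← Nat.card_zpowers]
  exact Nat.card_mono (Set.toFinite _) (Subgroup.zpowers_le.2 hmem)

theorem natCard_eq : Nat.card (SwapWreath D) = Nat.card D ^ 2 * 2 := by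
  rw [SemidirectProduct.card, Nat.card_fun, Nat.card_perm, Nat.card_eq_fintype_card (α := Bool),
    Fintype.card_bool, Nat.factorial_two]

theorem isPGroup_two_dihedral (k : ℕ) : IsPGroup 2 (SwapWreath (DihedralGroup (2 ^ k))) :=
  .of_card (n := 2 * (k + 1) + 1) (by rw [natCard_eq, DihedralGroup.nat_card]; ring)

end SwapWreath

end Wreath

theorem exists_isDihedralTriple_card_eq {M N : ℕ} [NeZero M] [NeZero N] (hM : 4 ∣ M) (hN : 4 ∣ N)
    (j : ℕ) :
    ∃ (G : Type) (_ : Group G) (α : G →* DihedralGroup M) (β : G →* DihedralGroup N)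
      (ρ0 ρ1 ρ2 : G), IsDihedralTriple α β ρ0 ρ1 ρ2 ∧ Subgroup.closure {ρ0, ρ1, ρ2} = ⊤ ∧
        Nat.card G = 2 ^ j * (2 * M * N) := by
  set m := 2 ^ j * (2 * M * N)
  have hx := SwapWreath.isCoxeterTriple (sr_mul_self (0 : ZMod (2 ^ m))) (sr_mul_self 1)
  have even_of_four_dvd {k : ℕ} (hk : 4 ∣ k) : Even k :=
    even_iff_two_dvd.2 (Dvd.dvd.trans (by decide) hk)
  refine (hx.of_dvd hM hN).exists_isDihedralTriple_card_eq (SwapWreath.isPGroup_two_dihedral m)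
    (even_of_four_dvd hM) (even_of_four_dvd hN) ?_
  have horder : orderOf (sr 0 * sr 1 : DihedralGroup (2 ^ m)) = 2 ^ m := by
    rw [sr_mul_sr, sub_zero, orderOf_r_one]
  calc m ≤ 2 ^ m := Nat.lt_two_pow_self.le
    _ ≤ _ := horder.ge.trans (SwapWreath.orderOf_mul_le_card_closure (sr 0) (sr 1))

theorem stmt_11_general (p n s t : ℕ) (hp : p ≠ 0) (hs : 2 ≤ s) (ht : 2 ≤ t)
    (hn : s + t + 1 ≤ n) :
    ∃ (G : Type) (inst : Group G) (ρ0 ρ1 ρ2 : G),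
      Finite G ∧ @IsType1StringC p n s t G inst ρ0 ρ1 ρ2 := by
  obtain ⟨j, rfl⟩ := Nat.exists_eq_add_of_le hn
  have hM : 4 ∣ 2 ^ s * p := (pow_dvd_pow 2 hs).mul_right p
  have hN : 4 ∣ 2 ^ t := pow_dvd_pow 2 ht
  have : NeZero p := ⟨hp⟩
  obtain ⟨G, _, α, β, ρ0, ρ1, ρ2, h, hgen, hcard⟩ := exists_isDihedralTriple_card_eq hM hN j
  replace hcard : Nat.card G = 2 ^ (s + t + 1 + j) * p := by rw [hcard]; ring
  refine ⟨G, inferInstance, ρ0, ρ1, ρ2, Nat.finite_of_card_ne_zero ?_, ?_⟩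
  · exact hcard ▸ NeZero.ne _
  · exact ⟨hcard, hgen, h.pair_left.orderOf_left, h.pair_left.orderOf_right,
      h.pair_right.orderOf_left, h.orderOf_mul_outer, h.orderOf_mul_left, h.orderOf_mul_right,
      h.interProp (by lia) (by lia)⟩

/-- Corollary 4.2: for every odd prime `p` and `s, t ≥ 2`, `n ≥ s + t + 1`, there is a
regular 3-polytope of order `2^n p` with Schläfli type `{2^s p, 2^t}`. -/
theorem stmt_11 (p n s t : ℕ) (hp : p.Prime) (hodd : Odd p)
    (hs : 2 ≤ s) (ht : 2 ≤ t) (hn : s + t + 1 ≤ n) :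
    ∃ (G : Type) (inst : Group G) (ρ0 ρ1 ρ2 : G),
      Finite G ∧ @IsType1StringC p n s t G inst ρ0 ρ1 ρ2 :=
  stmt_11_general p n s t hp.ne_zero hs ht hn
end
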